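/- arXiv:0704.0656 — 2 statements merged into one kernel-verified Lean document; each statement's English description precedes it below -/
import Mathlib

section
/- Suppose y* ∈ C¹_rd(𝕋;ℝⁿ) is a weak local minimizer of 𝓛 with both endpoints fixed, i.e. there is δ > 0 such that 𝓛[y*] ≤ 𝓛[y] for every y ∈ C¹_rd(𝕋;ℝⁿ) with y(a) = y*(a), y(b) = y*(b) and ‖y − y*‖_{1,∞} < δ. Then the Euler–Lagrange equation in delta-integral form holds: for every antiderivative F of t ↦ L_y(t, y*(t), y*^Δ(t)) there exists a constant c ∈ ℝⁿ such that L_v(t, y*(t), y*^Δ(t)) = F(σ(t)) + c for all t ∈ 𝕋^k (equivalently, L_v(t, y*(t), y*^Δ(t)) = ∫_a^{σ(t)} L_y(ξ, y*(ξ), y*^Δ(ξ)) Δξ + c). -/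
open Set Filter

noncomputable section

-- Forward jump operator of the set `S`.
open Classical in
def tsSigma (S : Set ℝ) (t : ℝ) : ℝ :=
  if ({s | s ∈ S ∧ t < s}).Nonempty then sInf {s | s ∈ S ∧ t < s} else t

-- Backward jump operator of the set `S`.
open Classical in
def tsRho (S : Set ℝ) (t : ℝ) : ℝ :=
  if ({s | s ∈ S ∧ s < t}).Nonempty then sSup {s | s ∈ S ∧ s < t} else t

/-- Graininess function. -/
def tsMu (S : Set ℝ) (t : ℝ) : ℝ := tsSigma S t - t

/-- `S^k = S \ (ρ(max S), max S]`. -/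
def tsTk (S : Set ℝ) : Set ℝ := S \ Set.Ioc (tsRho S (sSup S)) (sSup S)

/-- Delta differentiability at `t` of `f` regarded as a function on the time scale `S`,
with delta derivative `d`. -/
def deltaDiffAt {E : Type*} [NormedAddCommGroup E] [NormedSpace ℝ E]
    (S : Set ℝ) (f : ℝ → E) (t : ℝ) (d : E) : Prop :=
  ∀ ε > 0, ∃ δ > 0, ∀ s ∈ S ∩ Set.Ioo (t - δ) (t + δ),
    ‖f (tsSigma S t) - f s - (tsSigma S t - s) • d‖ ≤ ε * |tsSigma S t - s|

/-- rd-continuity of `f` on its domain `S`: continuity (within `S`) at right-dense points and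
existence of a finite left-sided limit along `S` at left-dense points. -/
def RdContinuousOn {E : Type*} [NormedAddCommGroup E]
    (S : Set ℝ) (f : ℝ → E) : Prop :=
  ∀ t ∈ S, (tsSigma S t = t → ContinuousWithinAt f S t) ∧
    (tsRho S t = t → ∃ l : E, Filter.Tendsto f (nhdsWithin t (S ∩ Set.Iio t)) (nhds l))

/-- `y ∈ C¹_rd(T)`, with delta derivative `yd`. -/
def C1rd {E : Type*} [NormedAddCommGroup E] [NormedSpace ℝ E]
    (T : Set ℝ) (y yd : ℝ → E) : Prop :=
  (∀ t ∈ tsTk T, deltaDiffAt T y t (yd t)) ∧ RdContinuousOn (tsTk T) yd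

/-- `F` is a delta antiderivative of `f` on the time scale `S`; the delta integral
`∫_c^d f Δt` is `F d - F c` for any such `F`. -/
def IsDeltaAntideriv {E : Type*} [NormedAddCommGroup E] [NormedSpace ℝ E]
    (S : Set ℝ) (f F : ℝ → E) : Prop :=
  ∀ t ∈ tsTk S, deltaDiffAt S F t (f t)

/-- Sup norm of `f` over the set `S`. -/
def tsSupNorm {E : Type*} [NormedAddCommGroup E] (S : Set ℝ) (f : ℝ → E) : ℝ :=
  sSup ((fun t => ‖f t‖) '' S)

abbrev En (n : ℕ) : Type := EuclideanSpace ℝ (Fin n)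

set_option linter.unusedSectionVars false
set_option linter.unusedVariables false

structure IsTS (T : Set ℝ) (a b : ℝ) : Prop where
  cl : IsClosed T
  sub : T ⊆ Icc a b
  amem : a ∈ T
  bmem : b ∈ T
  lt : a < b

namespace IsTS
variable {T : Set ℝ} {a b : ℝ} (h : IsTS T a b)
include h

theorem cpt : IsCompact T := isCompact_Icc.of_isClosed_subset h.cl h.sub

theorem sSup_eq : sSup T = b :=
  (IsGreatest.csSup_eq ⟨h.bmem, fun _ hx => (h.sub hx).2⟩)

theorem rho_eq : tsRho T b = sSup {s | s ∈ T ∧ s < b} := by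
  unfold tsRho
  rw [if_pos ⟨a, h.amem, h.lt⟩]

theorem rho_bdd : BddAbove {s | s ∈ T ∧ s < b} := ⟨b, fun _ hx => hx.2.le⟩

theorem rho_le : tsRho T b ≤ b := by
  rw [h.rho_eq]
  exact csSup_le ⟨a, h.amem, h.lt⟩ fun _ hx => hx.2.le

theorem tk_eq : tsTk T = T ∩ Iic (tsRho T b) := by
  unfold tsTk
  rw [h.sSup_eq]
  ext x
  simp only [Set.mem_sdiff, mem_Ioc, mem_inter_iff, mem_Iic, not_and, not_le]
  constructor
  · rintro ⟨hx, h2⟩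
    refine ⟨hx, ?_⟩
    by_contra hc
    push Not at hc
    exact absurd (h2 hc) (not_lt.2 (h.sub hx).2)
  · rintro ⟨hx, h2⟩
    exact ⟨hx, fun h3 => absurd h2 (not_le.2 h3)⟩

theorem tk_sub : tsTk T ⊆ T := by rw [h.tk_eq]; exact inter_subset_left

theorem mem_tk {t : ℝ} (ht : t ∈ T) (htb : t < b) : t ∈ tsTk T := by
  rw [h.tk_eq]
  refine ⟨ht, ?_⟩
  rw [mem_Iic, h.rho_eq]
  exact le_csSup h.rho_bdd ⟨ht, htb⟩

theorem a_tk : a ∈ tsTk T := h.mem_tk h.amem h.lt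

theorem tk_cpt : IsCompact (tsTk T) := by
  rw [h.tk_eq]; exact h.cpt.inter_right isClosed_Iic

theorem tk_Icc {t : ℝ} (ht : t ∈ tsTk T) : t ∈ Icc a b := h.sub (h.tk_sub ht)

theorem exists_left (hb : b ∈ tsTk T) {δ : ℝ} (hδ : 0 < δ) : ∃ s ∈ T, b - δ < s ∧ s < b := by
  rw [h.tk_eq] at hb
  have h1 : b ≤ tsRho T b := hb.2
  rw [h.rho_eq] at h1
  obtain ⟨s, hs, hs2⟩ := exists_lt_of_lt_csSup (⟨a, h.amem, h.lt⟩ : {s | s ∈ T ∧ s < b}.Nonempty)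
    (show b - δ < sSup {s | s ∈ T ∧ s < b} by linarith)
  exact ⟨s, hs.1, hs2, hs.2⟩

theorem sig_eq {t : ℝ} (ht : t < b) : tsSigma T t = sInf {s | s ∈ T ∧ t < s} := by
  unfold tsSigma
  rw [if_pos ⟨b, h.bmem, ht⟩]

theorem sig_b : tsSigma T b = b := by
  unfold tsSigma
  rw [if_neg]
  rintro ⟨s, hs, hs2⟩
  exact absurd (h.sub hs).2 (not_le.2 hs2)

theorem sig_le {t s : ℝ} (hs : s ∈ T) (hts : t < s) : tsSigma T t ≤ s := by
  rw [h.sig_eq (hts.trans_le (h.sub hs).2)]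
  exact csInf_le ⟨t, fun x hx => hx.2.le⟩ ⟨hs, hts⟩

theorem le_sig {t : ℝ} (ht : t ∈ T) : t ≤ tsSigma T t := by
  rcases (h.sub ht).2.lt_or_eq with h1 | h1
  · rw [h.sig_eq h1]
    exact le_csInf ⟨b, h.bmem, h1⟩ fun x hx => hx.2.le
  · rw [h1, h.sig_b]

theorem sig_mem {t : ℝ} (ht : t ∈ T) : tsSigma T t ∈ T := by
  rcases (h.sub ht).2.lt_or_eq with h1 | h1
  · rw [h.sig_eq h1]
    have : sInf {s | s ∈ T ∧ t < s} ∈ closure {s | s ∈ T ∧ t < s} :=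
      csInf_mem_closure ⟨b, h.bmem, h1⟩ ⟨t, fun x hx => hx.2.le⟩
    exact h.cl.closure_subset_iff.2 (fun x hx => hx.1) this
  · rw [h1, h.sig_b]; exact h.bmem

theorem sig_mono {t s : ℝ} (ht : t ∈ T) (hs : s ∈ T) (hts : t ≤ s) : tsSigma T t ≤ tsSigma T s := by
  rcases hts.lt_or_eq with h1 | h1
  · exact (h.sig_le hs h1).trans (h.le_sig hs)
  · rw [h1]

theorem exists_right {t : ℝ} (htb : t < b) (hst : tsSigma T t = t) {δ : ℝ} (hδ : 0 < δ) :
    ∃ s ∈ T, t < s ∧ s < t + δ := by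
  rw [h.sig_eq htb] at hst
  obtain ⟨s, hs, hs2⟩ := exists_lt_of_csInf_lt (⟨b, h.bmem, htb⟩ : {s | s ∈ T ∧ t < s}.Nonempty)
    (show sInf {s | s ∈ T ∧ t < s} < t + δ by linarith)
  exact ⟨s, hs.1, hs.2, hs2⟩

end IsTS

def tau (K : Set ℝ) (a u : ℝ) : ℝ := sSup (K ∩ Iic (max u a))

namespace IsTS
variable {T : Set ℝ} {a b : ℝ} (h : IsTS T a b)
include h

theorem tau_ne (u : ℝ) : (tsTk T ∩ Iic (max u a)).Nonempty :=
  ⟨a, h.a_tk, mem_Iic.2 (le_max_right _ _)⟩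

theorem tau_bdd (u : ℝ) : BddAbove (tsTk T ∩ Iic (max u a)) := ⟨max u a, fun _ hx => hx.2⟩

theorem tau_mem (u : ℝ) : tau (tsTk T) a u ∈ tsTk T :=
  ((h.tk_cpt.inter_right isClosed_Iic).sSup_mem (h.tau_ne u)).1

theorem tau_le {u : ℝ} (hu : a ≤ u) : tau (tsTk T) a u ≤ u := by
  have := ((h.tk_cpt.inter_right isClosed_Iic).sSup_mem (h.tau_ne u)).2
  rw [mem_Iic] at this
  exact this.trans (max_eq_left hu).le

theorem le_tau {u x : ℝ} (hx : x ∈ tsTk T) (hxu : x ≤ u) : x ≤ tau (tsTk T) a u :=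
  le_csSup (h.tau_bdd u) ⟨hx, hxu.trans (le_max_left _ _)⟩

theorem tau_self {t : ℝ} (ht : t ∈ tsTk T) : tau (tsTk T) a t = t :=
  le_antisymm (h.tau_le (h.tk_Icc ht).1) (h.le_tau ht le_rfl)

theorem tau_tau (u : ℝ) : tau (tsTk T) a (tau (tsTk T) a u) = tau (tsTk T) a u :=
  h.tau_self (h.tau_mem u)

theorem tau_mono : Monotone (tau (tsTk T) a) := fun u v huv =>
  csSup_le_csSup (h.tau_bdd v) (h.tau_ne u)
    (inter_subset_inter_right _ (Iic_subset_Iic.2 (max_le_max_right a huv)))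

theorem tau_gap {t u : ℝ} (ht : t ∈ tsTk T) (h1 : t ≤ u) (h2 : u < tsSigma T t) :
    tau (tsTk T) a u = t := by
  refine le_antisymm ?_ (h.le_tau ht h1)
  by_contra hc
  push Not at hc
  have := h.sig_le (h.tk_sub (h.tau_mem u)) hc
  have := h.tau_le ((h.tk_Icc ht).1.trans h1)
  linarith

/-- continuity of sigma at right dense points -/
theorem sig_cont {t : ℝ} (ht : t ∈ T) (hst : tsSigma T t = t) :
    ContinuousWithinAt (tsSigma T) T t := by
  rw [Metric.continuousWithinAt_iff]
  intro ε hε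
  rcases (h.sub ht).2.lt_or_eq with h1 | h1
  · obtain ⟨s', hs', h2, h3⟩ := h.exists_right h1 hst hε
    refine ⟨min ε (s' - t), lt_min hε (by linarith), fun {x} hx hd => ?_⟩
    rw [hst]
    rw [Real.dist_eq] at *
    have hd1 := hd.trans_le (min_le_left _ _)
    have hd2 := hd.trans_le (min_le_right _ _)
    rw [abs_lt] at *
    have h4 := h.le_sig hx
    have h5 := h.sig_le hs' (show x < s' by linarith)
    constructor <;> linarith
  · refine ⟨ε, hε, fun {x} hx hd => ?_⟩
    rw [hst]
    rw [Real.dist_eq] at *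
    rw [abs_lt] at *
    have h4 := h.le_sig hx
    have h5 := (h.sub (h.sig_mem hx)).2
    constructor <;> linarith

theorem sig_tk {t : ℝ} (ht : t ∈ tsTk T) (hst : tsSigma T t = t) : tsSigma (tsTk T) t = t := by
  unfold tsSigma
  split_ifs with hne
  · obtain ⟨s, hs, hts⟩ := hne
    have hlb : t ∈ lowerBounds {s | s ∈ tsTk T ∧ t < s} := fun x hx => hx.2.le
    refine le_antisymm ?_ (le_csInf ⟨s, hs, hts⟩ hlb)
    refine le_of_forall_pos_lt_add fun ε hε => ?_
    obtain ⟨x, hx, h1, h2⟩ := h.exists_right (hts.trans_le (h.tk_Icc hs).2) hst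
      (lt_min hε (sub_pos.2 hts))
    have h3 := min_le_left ε (s - t)
    have h4 := min_le_right ε (s - t)
    refine (csInf_le ⟨t, hlb⟩ ⟨h.mem_tk hx ?_, h1⟩).trans_lt (by linarith)
    have := (h.tk_Icc hs).2
    linarith
  · rfl

end IsTS

theorem deltaDiffAt_cont {E : Type*} [NormedAddCommGroup E] [NormedSpace ℝ E] {T : Set ℝ}
    {f : ℝ → E} {t : ℝ} {d : E} (ht : t ∈ T) (hf : deltaDiffAt T f t d) :
    ContinuousWithinAt f T t := by
  rw [Metric.continuousWithinAt_iff]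
  intro ε hε
  set m := |tsSigma T t - t| with hm
  have hm0 : 0 ≤ m := abs_nonneg _
  set ε' := ε / (2 * (2 * m + 1)) with he
  have hε' : 0 < ε' := by positivity
  obtain ⟨δ, hδ, H⟩ := hf ε' hε'
  refine ⟨min δ (min 1 (ε / (2 * (‖d‖ + 1)))), by positivity, fun {x} hx hd => ?_⟩
  rw [Real.dist_eq] at hd
  have hd1 := hd.trans_le (min_le_left _ _)
  have hd2 := hd.trans_le ((min_le_right _ _).trans (min_le_left _ _))
  have hd3 := hd.trans_le ((min_le_right _ _).trans (min_le_right _ _))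
  have h1 := H t ⟨ht, by constructor <;> linarith⟩
  have h2 := H x ⟨hx, by rw [abs_lt] at hd1; constructor <;> linarith⟩
  have h3 : |tsSigma T t - x| ≤ m + 1 := by
    have := abs_sub_le (tsSigma T t) t x
    rw [abs_sub_comm t x] at this
    linarith
  rw [dist_eq_norm]
  have e : f x - f t = (f (tsSigma T t) - f t - (tsSigma T t - t) • d)
      - (f (tsSigma T t) - f x - (tsSigma T t - x) • d) + (x - t) • d := by
    module
  have h4 : ‖(x - t) • d‖ ≤ ε / (2 * (‖d‖ + 1)) * ‖d‖ := by
    rw [norm_smul, Real.norm_eq_abs]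
    gcongr
  have h5 : ε / (2 * (‖d‖ + 1)) * ‖d‖ < ε / 2 := by
    rw [div_mul_eq_mul_div, div_lt_div_iff₀ (by positivity) (by positivity)]
    nlinarith [norm_nonneg d]
  have h6 : ε' * |tsSigma T t - x| ≤ ε' * (m + 1) := by gcongr
  have h7 : ε' * (2 * m + 1) = ε / 2 := by rw [he]; field_simp
  calc ‖f x - f t‖ ≤ ‖f (tsSigma T t) - f t - (tsSigma T t - t) • d‖
      + ‖f (tsSigma T t) - f x - (tsSigma T t - x) • d‖ + ‖(x - t) • d‖ := by
        rw [e]; exact (norm_add_le _ _).trans (by gcongr; exact norm_sub_le _ _)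
    _ < ε := by nlinarith

theorem IsTS.antideriv_cont {E : Type*} [NormedAddCommGroup E] [NormedSpace ℝ E] {T : Set ℝ}
    {a b : ℝ} (h : IsTS T a b) {f F : ℝ → E} (hF : IsDeltaAntideriv T f F) : ContinuousOn F T := by
  intro t ht
  by_cases hk : t ∈ tsTk T
  · exact deltaDiffAt_cont ht (hF t hk)
  · have htb : t = b := by
      by_contra hne
      exact hk (h.mem_tk ht (lt_of_le_of_ne (h.sub ht).2 hne))
    subst htb
    have hr : tsRho T t < t := by
      by_contra hc
      exact hk (by rw [h.tk_eq]; exact ⟨ht, not_lt.1 hc⟩)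
    rw [Metric.continuousWithinAt_iff]
    intro ε hε
    refine ⟨t - tsRho T t, by linarith, fun {x} hx hd => ?_⟩
    have : x = t := by
      by_contra hne
      have h1 := h.mem_tk hx (lt_of_le_of_ne (h.sub hx).2 hne)
      rw [h.tk_eq] at h1
      have h2 : x ≤ tsRho T t := h1.2
      rw [Real.dist_eq, abs_lt] at hd
      linarith
    rw [this, dist_self]; exact hε

/-- uniqueness -/
theorem IsTS.uniq {T : Set ℝ} {a b : ℝ} (h : IsTS T a b) {H : ℝ → ℝ}
    (hH : ∀ t ∈ tsTk T, deltaDiffAt T H t 0) : H b = H a := by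
  have key : ∀ ε > 0, |H b - H a| ≤ ε * (b - a) := by
    intro ε hε
    have hc : ContinuousOn H T := h.antideriv_cont (f := fun _ => 0) hH
    have hcl : IsClosed {t ∈ T | |H t - H a| ≤ ε * (t - a)} := by
      apply IsClosed.isClosed_le h.cl (f := fun t => |H t - H a|) (g := fun t => ε * (t - a))
      · exact (hc.sub continuousOn_const).abs
      · fun_prop
    have hcp := h.cpt.of_isClosed_subset hcl (fun x hx => hx.1)
    obtain ⟨c, hcA, hcg⟩ := hcp.exists_isGreatest ⟨a, h.amem, by simp⟩
    rcases (h.sub hcA.1).2.lt_or_eq with h1 | h1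
    · exfalso
      obtain ⟨δ, hδ, hd⟩ := hH c (h.mem_tk hcA.1 h1) ε hε
      have hcA2 := hcA.2
      rcases (h.le_sig hcA.1).lt_or_eq with h2 | h2
      · have h3 := hd c ⟨hcA.1, by constructor <;> linarith⟩
        have h4 : tsSigma T c ≤ c := by
          apply hcg
          refine ⟨h.sig_mem hcA.1, ?_⟩
          rw [abs_of_pos (by linarith), smul_zero, sub_zero, Real.norm_eq_abs] at h3
          have := abs_sub_le (H (tsSigma T c)) (H c) (H a)
          linarith
        linarith
      · obtain ⟨s, hs, hs1, hs2⟩ := h.exists_right h1 h2.symm hδ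
        have h3 := hd s ⟨hs, by constructor <;> linarith⟩
        have h4 : s ≤ c := by
          apply hcg
          refine ⟨hs, ?_⟩
          rw [← h2, abs_of_neg (by linarith), smul_zero, sub_zero, Real.norm_eq_abs] at h3
          have := abs_sub_le (H s) (H c) (H a)
          rw [abs_sub_comm] at h3
          linarith
        linarith
    · rw [← h1]; exact hcA.2
  have : |H b - H a| ≤ 0 := by
    refine le_of_forall_pos_le_add fun ε hε => ?_
    have hba := sub_pos.2 h.lt
    have := key (ε / (b - a)) (by positivity)
    rwa [div_mul_cancel₀ _ hba.ne', ← zero_add ε] at this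
  exact sub_eq_zero.1 (abs_nonpos_iff.1 this)

open MeasureTheory in
theorem nice_int {E : Type*} [NormedAddCommGroup E] [MeasurableSpace E] [BorelSpace E]
    [SecondCountableTopology E] {f : ℝ → E} (hf : Measurable f) {C : ℝ} (hC : ∀ u, ‖f u‖ ≤ C)
    (a b : ℝ) : IntervalIntegrable f volume a b := by
  rw [intervalIntegrable_iff]
  exact Measure.integrableOn_of_bounded (by simp) hf.aestronglyMeasurable
    (Eventually.of_forall hC)

theorem meas_comp {X Y : Type*} [TopologicalSpace X] [MeasurableSpace X]
    [BorelSpace X] [TopologicalSpace Y] [MeasurableSpace Y] [BorelSpace Y] {K : Set X} {h : X → Y}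
    (hc : ContinuousOn h K) {g : ℝ → X} (hg : Measurable g) (hm : ∀ u, g u ∈ K) :
    Measurable (fun u => h (g u)) := by
  have := (hc.domRestrict).measurable.comp (hg.subtype_mk (h := hm))
  exact this

/-- existence of antiderivatives -/
theorem IsTS.exist {E : Type*} [NormedAddCommGroup E] [NormedSpace ℝ E] [CompleteSpace E]
    [MeasurableSpace E] [BorelSpace E]
    [SecondCountableTopology E] {T : Set ℝ} {a b : ℝ} (h : IsTS T a b) {f : ℝ → E}
    (hm : Measurable (fun u => f (tau (tsTk T) a u))) {C : ℝ} (hC : ∀ t ∈ tsTk T, ‖f t‖ ≤ C)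
    (hc : ∀ t ∈ tsTk T, tsSigma T t = t → ContinuousWithinAt f (tsTk T) t) :
    IsDeltaAntideriv T f (fun t => ∫ u in a..t, f (tau (tsTk T) a u)) := by
  intro t ht ε hε
  have hC' : ∀ u, ‖f (tau (tsTk T) a u)‖ ≤ C := fun u => hC _ (h.tau_mem u)
  have hI := nice_int hm hC'
  have hsub : ∀ x y : ℝ, (∫ u in a..x, f (tau (tsTk T) a u)) - (∫ u in a..y, f (tau (tsTk T) a u))
      - (x - y) • f t = ∫ u in y..x, (f (tau (tsTk T) a u) - f t) := by
    intro x y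
    rw [intervalIntegral.integral_sub (hI _ _) (by simp), intervalIntegral.integral_const,
      intervalIntegral.integral_interval_sub_left (hI _ _) (hI _ _)]
  have htT := h.tk_sub ht
  have hI2 : ∀ x y, IntervalIntegrable (fun u => f (tau (tsTk T) a u) - f t)
    MeasureTheory.volume x y := fun x y => (hI x y).sub (by simp)
  rcases (h.le_sig htT).lt_or_eq with h1 | h1
  · have hC0 : 0 ≤ C := (norm_nonneg _).trans (hC t ht)
    set m := tsSigma T t - t with hmdef
    have hm0 : 0 < m := by linarith
    refine ⟨min m (ε * m / (2 * C + 1)), by positivity, fun s hs => ?_⟩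
    have hs1 := hs.2.1
    have hs2 := hs.2.2
    have hd1 := min_le_left m (ε * m / (2 * C + 1))
    have hd2 := min_le_right m (ε * m / (2 * C + 1))
    have hst : s ≤ t := by
      by_contra hc
      push Not at hc
      have := h.sig_le hs.1 hc
      linarith
    simp only []
    rw [hsub, ← intervalIntegral.integral_add_adjacent_intervals (hI2 s t) (hI2 t _)]
    have h2 : ∫ u in t..tsSigma T t, (f (tau (tsTk T) a u) - f t) = 0 := by
      rw [intervalIntegral.integral_congr_Ioo_of_le (g := fun _ => 0) h1.le]
      · simp
      · intro u hu
        simp only []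
        rw [h.tau_gap ht hu.1.le hu.2, sub_self]
    rw [h2, add_zero]
    have h3 : ‖∫ u in s..t, (f (tau (tsTk T) a u) - f t)‖ ≤ (2 * C) * |t - s| := by
      apply intervalIntegral.norm_integral_le_of_norm_le_const
      intro u _
      have := norm_sub_le (f (tau (tsTk T) a u)) (f t)
      linarith [hC' u, hC t ht]
    rw [abs_of_nonneg (by linarith)] at h3
    rw [abs_of_nonneg (by linarith)]
    refine h3.trans ?_
    have h4 : t - s ≤ ε * m / (2 * C + 1) := by linarith
    rw [le_div_iff₀ (by positivity)] at h4
    have h5 : ε * m ≤ ε * (tsSigma T t - s) := by gcongr; linarith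
    nlinarith
  · have hcc := hc t ht h1.symm
    rw [Metric.continuousWithinAt_iff] at hcc
    obtain ⟨δ, hδ, hd⟩ := hcc ε hε
    refine ⟨δ, hδ, fun s hs => ?_⟩
    rw [← h1]
    simp only []
    rw [hsub]
    have hs1 := hs.2.1
    have hs2 := hs.2.2
    apply intervalIntegral.norm_integral_le_of_norm_le_const
    intro u hu
    rw [← dist_eq_norm]
    refine (hd (h.tau_mem u) ?_).le
    rw [Real.dist_eq, abs_lt]
    have ha : a ≤ u := by
      rcases mem_uIoc.1 hu with hu | hu
      · linarith [(h.sub hs.1).1]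
      · linarith [(h.sub htT).1]
    have hle := h.tau_le ha
    rcases mem_uIoc.1 hu with hu | hu
    · have := h.le_tau (h.mem_tk hs.1 (by linarith [(h.sub htT).2])) hu.1.le
      constructor <;> linarith
    · have := h.le_tau ht hu.1.le
      constructor <;> linarith

theorem deltaDiffAt.sub {E : Type*} [NormedAddCommGroup E] [NormedSpace ℝ E] {T : Set ℝ}
    {f g : ℝ → E} {t : ℝ} {d e : E} (hf : deltaDiffAt T f t d) (hg : deltaDiffAt T g t e) :
    deltaDiffAt T (fun x => f x - g x) t (d - e) := by
  intro ε hε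
  obtain ⟨δ, hδ, h1⟩ := hf (ε / 2) (by positivity)
  obtain ⟨δ', hδ', h2⟩ := hg (ε / 2) (by positivity)
  refine ⟨min δ δ', by positivity, fun s hs => ?_⟩
  have hs1 := hs.2.1
  have hs2 := hs.2.2
  have hd1 := min_le_left δ δ'
  have hd2 := min_le_right δ δ'
  have h3 := h1 s ⟨hs.1, by constructor <;> linarith⟩
  have h4 := h2 s ⟨hs.1, by constructor <;> linarith⟩
  have e : f (tsSigma T t) - g (tsSigma T t) - (f s - g s) - (tsSigma T t - s) • (d - e)
    = (f (tsSigma T t) - f s - (tsSigma T t - s) • d)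
      - (g (tsSigma T t) - g s - (tsSigma T t - s) • e) := by module
  simp only []
  rw [e]
  refine (norm_sub_le _ _).trans ?_
  linarith

theorem deltaDiffAt.add_smul {E : Type*} [NormedAddCommGroup E] [NormedSpace ℝ E] {T : Set ℝ}
    {f g : ℝ → E} {t : ℝ} {d e : E} (hf : deltaDiffAt T f t d) (hg : deltaDiffAt T g t e) (r : ℝ) :
    deltaDiffAt T (fun x => f x + r • g x) t (d + r • e) := by
  intro ε hε
  obtain ⟨δ, hδ, h1⟩ := hf (ε / 2) (by positivity)
  obtain ⟨δ', hδ', h2⟩ := hg (ε / (2 * (|r| + 1))) (by positivity)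
  refine ⟨min δ δ', by positivity, fun s hs => ?_⟩
  have hs1 := hs.2.1
  have hs2 := hs.2.2
  have hd1 := min_le_left δ δ'
  have hd2 := min_le_right δ δ'
  have h3 := h1 s ⟨hs.1, by constructor <;> linarith⟩
  have h4 := h2 s ⟨hs.1, by constructor <;> linarith⟩
  have e : f (tsSigma T t) + r • g (tsSigma T t) - (f s + r • g s) - (tsSigma T t - s) • (d + r • e)
    = (f (tsSigma T t) - f s - (tsSigma T t - s) • d)
      + r • (g (tsSigma T t) - g s - (tsSigma T t - s) • e) := by module
  simp only []
  rw [e]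
  refine (norm_add_le _ _).trans ?_
  rw [norm_smul, Real.norm_eq_abs]
  have h5 : |r| * (ε / (2 * (|r| + 1)) * |tsSigma T t - s|) ≤ ε / 2 * |tsSigma T t - s| := by
    rw [← mul_assoc]
    gcongr
    rw [mul_div_assoc', div_le_div_iff₀ (by positivity) (by positivity)]
    nlinarith [abs_nonneg r]
  have h6 := mul_le_mul_of_nonneg_left h4 (abs_nonneg r)
  linarith

/-- product rule -/
theorem deltaDiffAt.inner_prod {E : Type*} [NormedAddCommGroup E] [InnerProductSpace ℝ E] {T : Set ℝ}
    {f g : ℝ → E} {t : ℝ} {d e : E} (ht : t ∈ T) (hf : deltaDiffAt T f t d)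
    (hg : deltaDiffAt T g t e) :
    deltaDiffAt T (fun x => inner ℝ (f x) (g x)) t
      (inner ℝ d (g t) + inner ℝ (f (tsSigma T t)) e) := by
  intro ε hε
  have hgc := deltaDiffAt_cont ht hg
  rw [Metric.continuousWithinAt_iff] at hgc
  set A := ‖d‖ with hA
  set B := ‖f (tsSigma T t)‖ with hB
  set D := ‖g t‖ with hD
  have hA0 : 0 ≤ A := norm_nonneg _
  have hB0 : 0 ≤ B := norm_nonneg _
  have hD0 : 0 ≤ D := norm_nonneg _
  obtain ⟨δ, hδ, h1⟩ := hf (ε / (3 * (D + 1))) (by positivity)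
  obtain ⟨δ', hδ', h2⟩ := hg (ε / (3 * (B + 1))) (by positivity)
  obtain ⟨δ₃, hδ₃, h3⟩ := hgc (min 1 (ε / (3 * (A + 1)))) (by positivity)
  refine ⟨min δ (min δ' δ₃), by positivity, fun s hs => ?_⟩
  have hs1 := hs.2.1
  have hs2 := hs.2.2
  have hd1 := min_le_left δ (min δ' δ₃)
  have hd2 := (min_le_right δ (min δ' δ₃)).trans (min_le_left _ _)
  have hd3 := (min_le_right δ (min δ' δ₃)).trans (min_le_right _ _)
  have k1 := h1 s ⟨hs.1, by constructor <;> linarith⟩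
  have k2 := h2 s ⟨hs.1, by constructor <;> linarith⟩
  have k3 := h3 hs.1 (by rw [Real.dist_eq, abs_lt]; constructor <;> linarith)
  rw [dist_eq_norm] at k3
  have k4 := k3.trans_le (min_le_left _ _)
  have k5 := k3.trans_le (min_le_right _ _)
  set m := tsSigma T t - s with hm
  set e1 := f (tsSigma T t) - f s - m • d with he1
  set e2 := g (tsSigma T t) - g s - m • e with he2
  have eq : inner ℝ (f (tsSigma T t)) (g (tsSigma T t)) - inner ℝ (f s) (g s)
      - m • (inner ℝ d (g t) + inner ℝ (f (tsSigma T t)) e)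
      = inner ℝ (f (tsSigma T t)) e2 + inner ℝ e1 (g s) + m * inner ℝ d (g s - g t) := by
    simp only [he1, he2, inner_sub_left, inner_sub_right, real_inner_smul_left,
      real_inner_smul_right, smul_eq_mul]
    ring
  simp only []
  rw [eq]
  have b1 : ‖inner ℝ (f (tsSigma T t)) e2‖ ≤ ε / 3 * |m| := by
    refine (norm_inner_le_norm _ _).trans ?_
    calc B * ‖e2‖ ≤ B * (ε / (3 * (B + 1)) * |m|) := by gcongr
      _ = (B * (ε / (3 * (B + 1)))) * |m| := by ring
      _ ≤ ε / 3 * |m| := by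
        gcongr
        rw [mul_div_assoc', div_le_div_iff₀ (by positivity) (by positivity)]
        nlinarith
  have b2 : ‖inner ℝ e1 (g s)‖ ≤ ε / 3 * |m| := by
    refine (norm_inner_le_norm _ _).trans ?_
    have : ‖g s‖ ≤ D + 1 := by
      have := norm_sub_norm_le (g s) (g t)
      linarith
    calc ‖e1‖ * ‖g s‖ ≤ (ε / (3 * (D + 1)) * |m|) * (D + 1) := by gcongr
      _ = ε / 3 * |m| := by field_simp
  have b3 : ‖m * inner ℝ d (g s - g t)‖ ≤ ε / 3 * |m| := by
    rw [norm_mul, Real.norm_eq_abs, mul_comm]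
    gcongr
    refine (norm_inner_le_norm _ _).trans ?_
    calc A * ‖g s - g t‖ ≤ A * (ε / (3 * (A + 1))) := by gcongr
      _ ≤ ε / 3 := by
        rw [mul_div_assoc', div_le_div_iff₀ (by positivity) (by positivity)]
        nlinarith
  refine (norm_add₃_le).trans ?_
  linarith

/-- FTC -/
theorem IsTS.ftc {T : Set ℝ} {a b : ℝ} (h : IsTS T a b) {f P : ℝ → ℝ}
    (hP : IsDeltaAntideriv T f P)
    (hm : Measurable (fun u => f (tau (tsTk T) a u))) {C : ℝ} (hC : ∀ t ∈ tsTk T, ‖f t‖ ≤ C)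
    (hc : ∀ t ∈ tsTk T, tsSigma T t = t → ContinuousWithinAt f (tsTk T) t) :
    P b - P a = ∫ u in a..b, f (tau (tsTk T) a u) := by
  have h1 := h.exist hm hC hc
  have h2 := h.uniq (H := fun x => P x - ∫ u in a..x, f (tau (tsTk T) a u)) (fun t ht => by
    have := (hP t ht).sub (h1 t ht)
    rwa [sub_self] at this)
  simp only [intervalIntegral.integral_same] at h2
  linarith

/-! rd-continuous functions on a compact set -/

theorem rd_bdd {E : Type*} [NormedAddCommGroup E] {K : Set ℝ} (hK : IsCompact K) {f : ℝ → E}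
    (hf : RdContinuousOn K f) : ∃ C, ∀ t ∈ K, ‖f t‖ ≤ C := by
  refine hK.induction_on (p := fun S => ∃ C, ∀ t ∈ S, ‖f t‖ ≤ C) ⟨0, by simp⟩ ?_ ?_ ?_
  · rintro s t hst ⟨C, hC⟩
    exact ⟨C, fun x hx => hC x (hst hx)⟩
  · rintro s t ⟨C, hC⟩ ⟨D, hD⟩
    refine ⟨max C D, fun x hx => ?_⟩
    rcases hx with hx | hx
    · exact (hC x hx).trans (le_max_left _ _)
    · exact (hD x hx).trans (le_max_right _ _)
  · intro t ht
    obtain ⟨h1, h2⟩ := hf t ht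
    by_cases hs : tsSigma K t = t
    · have h3 := (h1 hs).norm.eventually (gt_mem_nhds (show ‖f t‖ < ‖f t‖ + 1 by linarith))
      exact ⟨_, h3, ‖f t‖ + 1, fun x hx => (le_of_lt hx)⟩
    · -- right isolated
      have hright : ∀ᶠ x in nhdsWithin t K, x ≤ t := by
        unfold tsSigma at hs
        split_ifs at hs with hne
        · have hlt : t < sInf {s | s ∈ K ∧ t < s} :=
            lt_of_le_of_ne (le_csInf hne fun x hx => hx.2.le) (Ne.symm hs)
          filter_upwards [mem_nhdsWithin_of_mem_nhds (Iio_mem_nhds hlt), self_mem_nhdsWithin]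
            with x hx hxK
          by_contra hc
          push Not at hc
          exact absurd (csInf_le (s := {s | s ∈ K ∧ t < s}) ⟨t, fun y hy => hy.2.le⟩ ⟨hxK, hc⟩)
            (not_le.2 hx)
        · exact absurd rfl hs
      have hleft : ∃ C, ∀ᶠ x in nhdsWithin t K, x < t → ‖f x‖ ≤ C := by
        by_cases hr : tsRho K t = t
        · obtain ⟨l, hl⟩ := h2 hr
          have h3 := hl.norm.eventually (gt_mem_nhds (show ‖l‖ < ‖l‖ + 1 by linarith))
          refine ⟨‖l‖ + 1, ?_⟩
          rw [nhdsWithin_inter', eventually_inf_principal] at h3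
          filter_upwards [h3] with x hx hxt
          exact (hx hxt).le
        · refine ⟨0, ?_⟩
          unfold tsRho at hr
          split_ifs at hr with hne
          · have hlt : sSup {s | s ∈ K ∧ s < t} < t :=
              lt_of_le_of_ne (csSup_le hne fun x hx => hx.2.le) hr
            filter_upwards [mem_nhdsWithin_of_mem_nhds (Ioi_mem_nhds hlt), self_mem_nhdsWithin]
              with x hx hxK hxt
            exact absurd (le_csSup (s := {s | s ∈ K ∧ s < t}) ⟨t, fun y hy => hy.2.le⟩ ⟨hxK, hxt⟩)
              (not_le.2 hx)
          · exact absurd rfl hr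
      obtain ⟨C, hC⟩ := hleft
      refine ⟨_, hright.and hC, max C ‖f t‖, fun x hx => ?_⟩
      rcases hx.1.lt_or_eq with h5 | h5
      · exact (hx.2 h5).trans (le_max_left _ _)
      · rw [h5]; exact le_max_right _ _

theorem rd_countable (K : Set ℝ) : {t | t ∈ K ∧ tsSigma K t ≠ t}.Countable := by
  have hlt : ∀ t, tsSigma K t ≠ t → t < tsSigma K t := by
    intro t hs
    unfold tsSigma at hs ⊢
    split_ifs at hs ⊢ with hne
    · exact lt_of_le_of_ne (le_csInf hne fun x hx => hx.2.le) (Ne.symm hs)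
    · exact absurd rfl hs
  have hle : ∀ t s, s ∈ K → t < s → tsSigma K t ≤ s := by
    intro t s hs hts
    unfold tsSigma
    rw [if_pos ⟨s, hs, hts⟩]
    exact csInf_le ⟨t, fun y hy => hy.2.le⟩ ⟨hs, hts⟩
  apply Set.PairwiseDisjoint.countable_of_Ioo (y := tsSigma K)
  · have key : ∀ t ∈ K, ∀ s ∈ K, t < s → Disjoint (Ioo t (tsSigma K t)) (Ioo s (tsSigma K s)) := by
      intro t ht s hs hts
      rw [Set.disjoint_left]
      intro x hx hx2
      linarith [hx.2, hx2.1, hle t s hs hts]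
    intro t ht s hs hne
    rcases lt_or_gt_of_ne hne with h | h
    · exact key t ht.1 s hs.1 h
    · exact (key s hs.1 t ht.1 h).symm
  · intro t ht
    exact hlt t ht.2

theorem rd_meas {E : Type*} [NormedAddCommGroup E] [MeasurableSpace E] [BorelSpace E]
    {K : Set ℝ} (hK : IsCompact K) {f : ℝ → E}
    (hf : RdContinuousOn K f) {g : ℝ → ℝ} (hg : Measurable g) (hgK : ∀ u, g u ∈ K) :
    Measurable (fun u => f (g u)) := by
  set D := {t | t ∈ K ∧ tsSigma K t ≠ t}
  have hD : D.Countable := rd_countable K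
  have hDm : MeasurableSet D := hD.measurableSet
  have h1 : Measurable (K.domRestrict f) := by
    have hs : MeasurableSet ((↑) ⁻¹' D : Set K) := hDm.preimage measurable_subtype_coe
    apply measurable_of_restrict_of_restrict_compl hs
    · have : Countable ((↑) ⁻¹' D : Set K) :=
        (hD.preimage_of_injOn Subtype.val_injective.injOn).to_subtype
      exact measurable_of_countable _
    · apply Continuous.measurable
      rw [← continuousOn_iff_continuous_domRestrict]
      intro x hx
      have hx' : tsSigma K x = x := by
        by_contra hc
        exact hx ⟨x.2, hc⟩
      have h2 := (hf x x.2).1 hx'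
      exact ((continuousWithinAt_iff_continuousAt_domRestrict f x.2).1 h2).continuousWithinAt
  exact h1.comp (hg.subtype_mk (h := hgK))

theorem grad_fderiv {n : ℕ} {l : En n → En n → ℝ} {y v gy gv : En n}
    (hd : DifferentiableAt ℝ (fun p : En n × En n => l p.1 p.2) (y, v))
    (hy : HasGradientAt (fun z => l z v) gy y) (hv : HasGradientAt (fun z => l y z) gv v)
    (e p : En n) :
    fderiv ℝ (fun p : En n × En n => l p.1 p.2) (y, v) (e, p) = inner ℝ gy e + inner ℝ gv p := by
  have h0 := hd.hasFDerivAt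
  have h1 : HasFDerivAt (fun z => l z v)
      ((fderiv ℝ (fun p : En n × En n => l p.1 p.2) (y, v)).comp
        (ContinuousLinearMap.inl ℝ (En n) (En n))) y :=
    h0.comp (f := fun z => (z, v)) y (hasFDerivAt_prodMk_left y v)
  have h2 : HasFDerivAt (fun z => l y z)
      ((fderiv ℝ (fun p : En n × En n => l p.1 p.2) (y, v)).comp
        (ContinuousLinearMap.inr ℝ (En n) (En n))) v :=
    h0.comp (f := fun z => (y, z)) v (hasFDerivAt_prodMk_right y v)
  have e1 := congrArg (fun A => A e) (h1.unique hy.hasFDerivAt)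
  have e2 := congrArg (fun A => A p) (h2.unique hv.hasFDerivAt)
  simp only [ContinuousLinearMap.comp_apply, ContinuousLinearMap.inl_apply,
    ContinuousLinearMap.inr_apply, InnerProductSpace.toDual_apply_apply] at e1 e2
  rw [← e1, ← e2, ← map_add]
  simp

open MeasureTheory in
theorem var_deriv {n : ℕ} {T : Set ℝ} (hT : IsCompact T)
    (L : ℝ → En n → En n → ℝ) (Ly Lv : ℝ → En n → En n → En n)
    (hLc : ContinuousOn (fun p : ℝ × En n × En n => L p.1 p.2.1 p.2.2)
      (T ×ˢ (univ : Set (En n × En n))))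
    (hLC2 : ∀ t ∈ T, ContDiff ℝ 2 (fun p : En n × En n => L t p.1 p.2))
    (hLy : ∀ t ∈ T, ∀ y v : En n, HasGradientAt (fun z => L t z v) (Ly t y v) y)
    (hLv : ∀ t ∈ T, ∀ y v : En n, HasGradientAt (fun z => L t y z) (Lv t y v) v)
    (hLyc : ContinuousOn (fun p : ℝ × En n × En n => Ly p.1 p.2.1 p.2.2)
      (T ×ˢ (univ : Set (En n × En n))))
    (hLvc : ContinuousOn (fun p : ℝ × En n × En n => Lv p.1 p.2.1 p.2.2)
      (T ×ˢ (univ : Set (En n × En n))))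
    {p : ℝ → ℝ} (hp : Measurable p) (hpT : ∀ u, p u ∈ T) {Y V E P : ℝ → En n}
    (hYm : Measurable Y) (hVm : Measurable V) (hEm : Measurable E) (hPm : Measurable P)
    {R : ℝ} (hY : ∀ u, ‖Y u‖ ≤ R) (hV : ∀ u, ‖V u‖ ≤ R) (hE : ∀ u, ‖E u‖ ≤ R)
    (hP : ∀ u, ‖P u‖ ≤ R) (a b : ℝ) :
    HasDerivAt (fun s : ℝ => ∫ u in a..b, L (p u) (Y u + s • E u) (V u + s • P u))
      (∫ u in a..b, (inner ℝ (Ly (p u) (Y u) (V u)) (E u)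
        + inner ℝ (Lv (p u) (Y u) (V u)) (P u))) 0 := by
  have hR : 0 ≤ R := (norm_nonneg _).trans (hY 0)
  have hKc : IsCompact (T ×ˢ (Metric.closedBall (0 : En n) (2 * R) ×ˢ
      Metric.closedBall (0 : En n) (2 * R))) :=
    hT.prod ((isCompact_closedBall _ _).prod (isCompact_closedBall _ _))
  have hKs : (T ×ˢ (Metric.closedBall (0 : En n) (2 * R) ×ˢ
      Metric.closedBall (0 : En n) (2 * R))) ⊆ T ×ˢ (univ : Set (En n × En n)) :=
    prod_mono_right (subset_univ _)
  obtain ⟨M0, hM0⟩ := hKc.exists_bound_of_continuousOn (hLc.mono hKs)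
  obtain ⟨M1, hM1⟩ := hKc.exists_bound_of_continuousOn (hLyc.mono hKs)
  obtain ⟨M2, hM2⟩ := hKc.exists_bound_of_continuousOn (hLvc.mono hKs)
  have hb : ∀ (A B : ℝ → En n), (∀ u, ‖A u‖ ≤ R) → (∀ u, ‖B u‖ ≤ R) → ∀ s ∈ Metric.ball (0 : ℝ) 1,
      ∀ u, A u + s • B u ∈ Metric.closedBall (0 : En n) (2 * R) := by
    intro A B hA hB s hs u
    rw [mem_closedBall_zero_iff]
    have hs' : ‖s‖ ≤ 1 := (mem_ball_zero_iff.1 hs).le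
    refine (norm_add_le _ _).trans ?_
    rw [norm_smul]
    nlinarith [hA u, hB u, norm_nonneg (B u), norm_nonneg s]
  have hmem : ∀ s ∈ Metric.ball (0 : ℝ) 1, ∀ u, (p u, Y u + s • E u, V u + s • P u) ∈
      (T ×ˢ (Metric.closedBall (0 : En n) (2 * R) ×ˢ Metric.closedBall (0 : En n) (2 * R))) :=
    fun s hs u => ⟨hpT u, hb Y E hY hE s hs u, hb V P hV hP s hs u⟩
  have hmg : ∀ s : ℝ, Measurable (fun u => (p u, Y u + s • E u, V u + s • P u)) := by
    intro s; fun_prop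
  have hu : ∀ s : ℝ, ∀ u, (p u, Y u + s • E u, V u + s • P u) ∈ T ×ˢ (univ : Set (En n × En n)) :=
    fun s u => ⟨hpT u, mem_univ _⟩
  have h0 : (0 : ℝ) ∈ Metric.ball (0 : ℝ) 1 := by simp
  have hLm := fun s => meas_comp hLc (hmg s) (hu s)
  have hLym := fun s => meas_comp hLyc (hmg s) (hu s)
  have hLvm := fun s => meas_comp hLvc (hmg s) (hu s)
  have key := intervalIntegral.hasDerivAt_integral_of_dominated_loc_of_deriv_le (μ := volume)
    (a := a) (b := b)
    (F := fun s u => L (p u) (Y u + s • E u) (V u + s • P u))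
    (F' := fun s u => inner ℝ (Ly (p u) (Y u + s • E u) (V u + s • P u)) (E u)
        + inner ℝ (Lv (p u) (Y u + s • E u) (V u + s • P u)) (P u))
    (x₀ := (0 : ℝ)) (bound := fun _ => M1 * R + M2 * R) (Metric.ball_mem_nhds 0 one_pos)
    (Eventually.of_forall fun s => (hLm s).aestronglyMeasurable)
    (nice_int (hLm 0) (fun u => hM0 _ (hmem 0 h0 u)) a b)
    (((hLym 0).inner hEm).add ((hLvm 0).inner hPm)).aestronglyMeasurable
    (Eventually.of_forall fun u _ s hs => by
      refine (norm_add_le _ _).trans (add_le_add ?_ ?_)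
      · refine (norm_inner_le_norm _ _).trans ?_
        have h1 := hM1 _ (hmem s hs u)
        exact mul_le_mul h1 (hE u) (norm_nonneg _) ((norm_nonneg _).trans h1)
      · refine (norm_inner_le_norm _ _).trans ?_
        have h1 := hM2 _ (hmem s hs u)
        exact mul_le_mul h1 (hP u) (norm_nonneg _) ((norm_nonneg _).trans h1))
    (by simp)
    (Eventually.of_forall fun u _ s hs => by
      have hd := ((hLC2 _ (hpT u)).differentiable (by norm_num)).differentiableAt
        (x := (Y u + s • E u, V u + s • P u))
      have hc : HasDerivAt (fun s : ℝ => (Y u + s • E u, V u + s • P u)) (E u, P u) s := by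
        have h1 : HasDerivAt (fun s : ℝ => Y u + s • E u) (E u) s := by
          simpa using ((hasDerivAt_id s).smul_const (E u)).const_add (Y u)
        have h2 : HasDerivAt (fun s : ℝ => V u + s • P u) (P u) s := by
          simpa using ((hasDerivAt_id s).smul_const (P u)).const_add (V u)
        exact h1.prodMk h2
      have := hd.hasFDerivAt.comp_hasDerivAt s hc
      rw [grad_fderiv hd (hLy _ (hpT u) _ _) (hLv _ (hpT u) _ _)] at this
      exact this)
  have := key.2
  simpa using this

theorem IsTS.along {n : ℕ} {G : Type*} [NormedAddCommGroup G] [MeasurableSpace G] [BorelSpace G]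
    {T : Set ℝ} {a b : ℝ} (h : IsTS T a b)
    {Q : ℝ → En n → En n → G} (hQ : ContinuousOn (fun p : ℝ × En n × En n => Q p.1 p.2.1 p.2.2)
      (T ×ˢ (univ : Set (En n × En n)))) {Y V : ℝ → En n} (hY : ContinuousOn Y (tsTk T))
    (hV : RdContinuousOn (tsTk T) V) :
    Measurable (fun u => Q (tau (tsTk T) a u) (Y (tau (tsTk T) a u)) (V (tau (tsTk T) a u))) ∧
    (∃ C, ∀ t ∈ tsTk T, ‖Q t (Y t) (V t)‖ ≤ C) ∧
    (∀ t ∈ tsTk T, tsSigma T t = t → ContinuousWithinAt (fun t => Q t (Y t) (V t)) (tsTk T) t) := by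
  have hτ : Measurable (tau (tsTk T) a) := h.tau_mono.measurable
  refine ⟨?_, ?_, ?_⟩
  · have hYm := meas_comp hY hτ h.tau_mem
    have hVm := rd_meas h.tk_cpt hV hτ h.tau_mem
    exact meas_comp hQ (hτ.prodMk (hYm.prodMk hVm)) (fun u => ⟨h.tk_sub (h.tau_mem u), mem_univ _⟩)
  · obtain ⟨R, hR⟩ := h.tk_cpt.exists_bound_of_continuousOn hY
    obtain ⟨S, hS⟩ := rd_bdd h.tk_cpt hV
    have hKc : IsCompact (T ×ˢ (Metric.closedBall (0 : En n) R ×ˢ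
      Metric.closedBall (0 : En n) S)) :=
      h.cpt.prod ((isCompact_closedBall _ _).prod (isCompact_closedBall _ _))
    obtain ⟨C, hC⟩ := hKc.exists_bound_of_continuousOn
      (hQ.mono (prod_mono_right (subset_univ _)))
    exact ⟨C, fun t ht => hC (t, Y t, V t) ⟨h.tk_sub ht, mem_closedBall_zero_iff.2 (hR t ht),
      mem_closedBall_zero_iff.2 (hS t ht)⟩⟩
  · intro t ht hst
    have h1 : ContinuousWithinAt (fun t => (t, Y t, V t)) (tsTk T) t :=
      continuousWithinAt_id.prodMk ((hY t ht).prodMk ((hV t ht).1 (h.sig_tk ht hst)))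
    exact (hQ (t, Y t, V t) ⟨h.tk_sub ht, mem_univ _⟩).comp (f := fun t => (t, Y t, V t)) h1
      (fun x hx => ⟨h.tk_sub hx, mem_univ _⟩)

open MeasureTheory in
theorem IsTS.dubois {n : ℕ} {T : Set ℝ} {a b : ℝ} (h : IsTS T a b) {φ : ℝ → En n}
    (hm : Measurable (fun u => φ (tau (tsTk T) a u))) {C : ℝ} (hC : ∀ t ∈ tsTk T, ‖φ t‖ ≤ C)
    (hc : ∀ t ∈ tsTk T, tsSigma T t = t → ContinuousWithinAt φ (tsTk T) t)
    (H : ∀ g : ℝ → ℝ, Continuous g → ∫ u in a..b, g (tau (tsTk T) a u) = 0 →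
      ∫ u in a..b, g (tau (tsTk T) a u) • φ (tau (tsTk T) a u) = 0) :
    ∃ c : En n, ∀ t ∈ tsTk T, φ t = c := by
  set τ := tau (tsTk T) a with hτdef
  have hτ : Measurable τ := h.tau_mono.measurable
  have hba : 0 < b - a := sub_pos.2 h.lt
  have hφI := nice_int hm (fun u => hC _ (h.tau_mem u)) a b
  set c : En n := (b - a)⁻¹ • ∫ u in a..b, φ (τ u) with hcdef
  have hcI : ∫ u in a..b, φ (τ u) = (b - a) • c := by
    rw [hcdef, smul_inv_smul₀ hba.ne']
  refine ⟨c, ?_⟩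
  set m := Measure.map τ (volume.restrict (Ioc a b)) with hmdef
  have hfin : IsFiniteMeasure (volume.restrict (Ioc a b)) := inferInstance
  have hmf : IsFiniteMeasure m := Measure.isFiniteMeasure_map _ _
  have hΦm : Measurable (fun x => φ (τ x) - c) := hm.sub measurable_const
  have hae : ∀ᵐ x ∂m, φ (τ x) - c = 0 := by
    apply ae_eq_zero_of_integral_contDiff_smul_eq_zero
    · apply Integrable.locallyIntegrable
      refine Integrable.of_bound hΦm.aestronglyMeasurable (C + ‖c‖) (Eventually.of_forall fun x => ?_)
      exact (norm_sub_le _ _).trans (by gcongr; exact hC _ (h.tau_mem x))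
    · intro g hg hgs
      have hgc : Continuous g := hg.continuous
      have hsm : Measurable (fun x => g x • (φ (τ x) - c)) := hgc.measurable.smul hΦm
      rw [hmdef, integral_map hτ.aemeasurable hsm.aestronglyMeasurable,
        ← intervalIntegral.integral_of_le h.lt.le]
      simp only [hτdef, h.tau_tau]
      rw [← hτdef]
      obtain ⟨D, hD⟩ := h.tk_cpt.exists_bound_of_continuousOn hgc.continuousOn
      have hgτm : Measurable (fun u => g (τ u)) := hgc.measurable.comp hτ
      have hgI := nice_int hgτm (fun u => hD _ (h.tau_mem u)) a b
      have hgφI : IntervalIntegrable (fun u => g (τ u) • φ (τ u)) volume a b := by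
        refine nice_int (hgτm.smul hm) (C := D * C) (fun u => ?_) a b
        change ‖g (τ u) • φ (τ u)‖ ≤ D * C
        rw [norm_smul]
        have h1 := hD _ (h.tau_mem u)
        exact mul_le_mul h1 (hC _ (h.tau_mem u)) (norm_nonneg _) ((norm_nonneg _).trans h1)
      set k : ℝ := (b - a)⁻¹ * ∫ u in a..b, g (τ u) with hk
      have hkI : ∫ u in a..b, g (τ u) = (b - a) * k := by
        rw [hk, mul_inv_cancel_left₀ hba.ne']
      have h2 := H (fun x => g x - k) (hgc.sub continuous_const) (by
        rw [intervalIntegral.integral_sub hgI (by simp), hkI]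
        simp)
      simp only [sub_smul] at h2
      have hkφ : IntervalIntegrable (fun u => k • φ (τ u)) volume a b := hφI.smul k
      rw [intervalIntegral.integral_sub hgφI hkφ, intervalIntegral.integral_smul, hcI,
        sub_eq_zero] at h2
      have hgc' : IntervalIntegrable (fun u => g (τ u) • c) volume a b := by
        refine nice_int (hgτm.smul_const c) (C := D * ‖c‖) (fun u => ?_) a b
        rw [norm_smul]
        exact mul_le_mul_of_nonneg_right (hD _ (h.tau_mem u)) (norm_nonneg _)
      simp only [smul_sub]
      rw [intervalIntegral.integral_sub hgφI
        hgc', h2,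
        intervalIntegral.integral_smul_const, hkI, sub_eq_zero, smul_smul, mul_comm]
  have hae2 := ae_of_ae_map hτ.aemeasurable hae
  simp only [hτdef, h.tau_tau] at hae2
  rw [← hτdef] at hae2
  -- extraction of points
  have hex : ∀ x y, a ≤ x → y ≤ b → x < y → ∃ u, x < u ∧ u < y ∧ φ (τ u) = c := by
    intro x y hx hy hxy
    by_contra hcon
    push Not at hcon
    rw [ae_restrict_iff' measurableSet_Ioc, ae_iff] at hae2
    have hsub : Ioo x y ⊆ {u | ¬ (u ∈ Ioc a b → φ (τ u) - c = 0)} := by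
      intro u hu hh
      exact hcon u hu.1 hu.2 (sub_eq_zero.1 (hh ⟨by linarith [hu.1], by linarith [hu.2]⟩))
    have := measure_mono_null hsub hae2
    rw [Real.volume_Ioo] at this
    simp at this
    linarith
  intro t ht
  have htT := h.tk_sub ht
  have htI := h.tk_Icc ht
  rcases (h.le_sig htT).lt_or_eq with h1 | h1
  · obtain ⟨u, hu1, hu2, hu3⟩ := hex t (tsSigma T t) htI.1 (h.sub (h.sig_mem htT)).2 h1
    rwa [hτdef, h.tau_gap ht hu1.le hu2] at hu3
  · have hcc := hc t ht h1.symm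
    rw [Metric.continuousWithinAt_iff] at hcc
    by_contra hne
    obtain ⟨δ, hδ, hd⟩ := hcc (dist c (φ t)) (dist_pos.2 (Ne.symm hne))
    have : ∃ u, dist (τ u) t < δ ∧ φ (τ u) = c := by
      rcases htI.2.lt_or_eq with h2 | h2
      · have h3 := min_le_left b (t + δ)
        have h4 := min_le_right b (t + δ)
        obtain ⟨u, hu1, hu2, hu3⟩ := hex t (min b (t + δ)) htI.1 h3 (lt_min h2 (by linarith))
        refine ⟨u, ?_, hu3⟩
        have h5 := h.tau_le (htI.1.trans hu1.le)
        have h6 := h.le_tau ht hu1.le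
        rw [Real.dist_eq, abs_lt]
        constructor <;> linarith
      · obtain ⟨s, hs, hs1, hs2⟩ := h.exists_left (h2 ▸ ht) hδ
        obtain ⟨u, hu1, hu2, hu3⟩ := hex s b (h.sub hs).1 le_rfl hs2
        refine ⟨u, ?_, hu3⟩
        have h5 := h.tau_le ((h.sub hs).1.trans hu1.le)
        have h6 := h.le_tau (h.mem_tk hs hs2) hu1.le
        rw [Real.dist_eq, abs_lt]
        constructor <;> linarith
    obtain ⟨u, hu1, hu2⟩ := this
    have := hd (h.tau_mem u) hu1
    rw [← hτdef, hu2] at this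
    exact lt_irrefl _ this


theorem euler_lagrange_delta_integral_form
    {n : ℕ} (hn : 1 ≤ n)
    (T₀ : Set ℝ) (hT₀closed : IsClosed T₀)
    (a b : ℝ) (ha : a ∈ T₀) (hb : b ∈ T₀) (hab : a < b)
    (T : Set ℝ) (hT : T = Icc a b ∩ T₀)
    (hT3 : ∃ c ∈ T, c ≠ a ∧ c ≠ b)
    (L : ℝ → En n → En n → ℝ) (Ly Lv : ℝ → En n → En n → En n)
    (hLc : ContinuousOn (fun p : ℝ × En n × En n => L p.1 p.2.1 p.2.2)
      (T ×ˢ (univ : Set (En n × En n))))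
    (hLC2 : ∀ t ∈ T, ContDiff ℝ 2 (fun p : En n × En n => L t p.1 p.2))
    (hLy : ∀ t ∈ T, ∀ y v : En n, HasGradientAt (fun z => L t z v) (Ly t y v) y)
    (hLv : ∀ t ∈ T, ∀ y v : En n, HasGradientAt (fun z => L t y z) (Lv t y v) v)
    (hLyc : ContinuousOn (fun p : ℝ × En n × En n => Ly p.1 p.2.1 p.2.2)
      (T ×ˢ (univ : Set (En n × En n))))
    (hLvc : ContinuousOn (fun p : ℝ × En n × En n => Lv p.1 p.2.1 p.2.2)
      (T ×ˢ (univ : Set (En n × En n))))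
    (ys yds : ℝ → En n) (hys : C1rd T ys yds)
    (hmin : ∃ δ > 0, ∀ y yd : ℝ → En n, C1rd T y yd →
      y a = ys a → y b = ys b →
      tsSupNorm (tsTk T) (fun t => y t - ys t)
        + tsSupNorm (tsTk T) (fun t => yd t - yds t) < δ →
      ∀ F G : ℝ → ℝ,
        IsDeltaAntideriv T (fun t => L t (ys t) (yds t)) F →
        IsDeltaAntideriv T (fun t => L t (y t) (yd t)) G →
        F b - F a ≤ G b - G a) :
    ∀ F : ℝ → En n, IsDeltaAntideriv T (fun t => Ly t (ys t) (yds t)) F →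
      ∃ c : En n, ∀ t ∈ tsTk T, Lv t (ys t) (yds t) = F (tsSigma T t) + c := by
  have h : IsTS T a b := by
    subst hT
    exact ⟨isClosed_Icc.inter hT₀closed, inter_subset_left, ⟨⟨le_rfl, hab.le⟩, ha⟩,
      ⟨⟨hab.le, le_rfl⟩, hb⟩, hab⟩
  intro F hF
  set τ := tau (tsTk T) a with hτdef
  have hτ : Measurable τ := h.tau_mono.measurable
  have hysc : ContinuousOn ys (tsTk T) := (h.antideriv_cont hys.1).mono h.tk_sub
  have hFc : ContinuousOn F T := h.antideriv_cont hF
  have hστ : Measurable (fun u => tsSigma T (τ u)) := by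
    apply Monotone.measurable
    intro u v huv
    exact h.sig_mono (h.tk_sub (h.tau_mem u)) (h.tk_sub (h.tau_mem v)) (h.tau_mono huv)
  have hFσm : Measurable (fun u => F (tsSigma T (τ u))) :=
    meas_comp hFc hστ (fun u => h.sig_mem (h.tk_sub (h.tau_mem u)))
  obtain ⟨CF, hCF⟩ := h.cpt.exists_bound_of_continuousOn hFc
  have hCFσ : ∀ t ∈ tsTk T, ‖F (tsSigma T t)‖ ≤ CF := fun t ht => hCF _ (h.sig_mem (h.tk_sub ht))
  have hFσc : ∀ t ∈ tsTk T, tsSigma T t = t →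
      ContinuousWithinAt (fun t => F (tsSigma T t)) (tsTk T) t := by
    intro t ht hst
    have h1 : ContinuousWithinAt F T (tsSigma T t) := hFc _ (h.sig_mem (h.tk_sub ht))
    exact (h1.comp (h.sig_cont (h.tk_sub ht) hst) (fun x hx => h.sig_mem hx)).mono h.tk_sub
  obtain ⟨hLym, ⟨Cy, hCy⟩, hLyk⟩ := h.along hLyc hysc hys.2
  obtain ⟨hLvm, ⟨Cv, hCv⟩, hLvk⟩ := h.along hLvc hysc hys.2
  have hysm := meas_comp hysc hτ h.tau_mem
  have hydsm := rd_meas h.tk_cpt hys.2 hτ h.tau_mem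
  obtain ⟨R1, hR1⟩ := h.tk_cpt.exists_bound_of_continuousOn hysc
  obtain ⟨R2, hR2⟩ := rd_bdd h.tk_cpt hys.2
  obtain ⟨c, hc⟩ := h.dubois (φ := fun t => Lv t (ys t) (yds t) - F (tsSigma T t))
    (hLvm.sub hFσm) (C := Cv + CF)
    (fun t ht => (norm_sub_le _ _).trans (add_le_add (hCv t ht) (hCFσ t ht)))
    (fun t ht hst => (hLvk t ht hst).sub (hFσc t ht hst)) (by
      intro g hg hg0
      change ∫ u in a..b, g (τ u) = 0 at hg0
      change ∫ u in a..b, g (τ u) • (Lv (τ u) (ys (τ u)) (yds (τ u)) - F (tsSigma T (τ u))) = 0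
      refine ext_inner_left ℝ fun w => ?_
      rw [inner_zero_right]
      obtain ⟨D, hD⟩ := h.tk_cpt.exists_bound_of_continuousOn hg.continuousOn
      have hgτm : Measurable (fun u => g (τ u)) := hg.measurable.comp hτ
      set ψ : ℝ → En n := fun t => g t • w with hψ
      have hψm : Measurable (fun u => ψ (τ u)) := hgτm.smul_const w
      have hψc : Continuous ψ := hg.smul continuous_const
      obtain ⟨R4, hR4⟩ := h.tk_cpt.exists_bound_of_continuousOn hψc.continuousOn
      set η : ℝ → En n := fun t => ∫ u in a..t, ψ (τ u) with hη
      have hηd : IsDeltaAntideriv T ψ η :=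
        h.exist hψm hR4 (fun t ht _ => hψc.continuousWithinAt)
      have hηa : η a = 0 := by simp [hη]
      have hηb : η b = 0 := by
        simp only [hη, hψ]
        rw [intervalIntegral.integral_smul_const, hg0, zero_smul]
      have hηc : ContinuousOn η (tsTk T) := (h.antideriv_cont hηd).mono h.tk_sub
      have hηm := meas_comp hηc hτ h.tau_mem
      obtain ⟨R3, hR3⟩ := h.tk_cpt.exists_bound_of_continuousOn hηc
      set R := max (max R1 R2) (max R3 R4) with hR
      have hRR1 : R1 ≤ R := (le_max_left _ _).trans (le_max_left _ _)
      have hRR2 : R2 ≤ R := (le_max_right _ _).trans (le_max_left _ _)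
      have hRR3 : R3 ≤ R := (le_max_left _ _).trans (le_max_right _ _)
      have hRR4 : R4 ≤ R := (le_max_right _ _).trans (le_max_right _ _)
      have hR0 : 0 ≤ R := (norm_nonneg _).trans ((hR1 a h.a_tk).trans hRR1)
      -- first variation
      have hder := var_deriv h.cpt L Ly Lv hLc hLC2 hLy hLv hLyc hLvc hτ
        (fun u => h.tk_sub (h.tau_mem u)) hysm hydsm hηm hψm
        (fun u => (hR1 _ (h.tau_mem u)).trans hRR1) (fun u => (hR2 _ (h.tau_mem u)).trans hRR2)
        (fun u => (hR3 _ (h.tau_mem u)).trans hRR3) (fun u => (hR4 _ (h.tau_mem u)).trans hRR4) a b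
      have hrd : ∀ s : ℝ, RdContinuousOn (tsTk T) (fun t => yds t + s • ψ t) := by
        intro s t ht
        obtain ⟨k1, k2⟩ := hys.2 t ht
        refine ⟨fun hst => (k1 hst).add (hψc.continuousWithinAt.const_smul s), fun hrt => ?_⟩
        obtain ⟨l, hl⟩ := k2 hrt
        exact ⟨l + s • ψ t, hl.add (((hψc.tendsto t).mono_left nhdsWithin_le_nhds).const_smul s)⟩
      have hcy : ∀ s : ℝ, ContinuousOn (fun t => ys t + s • η t) (tsTk T) :=
        fun s => hysc.add (hηc.const_smul s)
      have hmin0 : IsLocalMin (fun s : ℝ => ∫ u in a..b,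
          L (τ u) (ys (τ u) + s • η (τ u)) (yds (τ u) + s • ψ (τ u))) 0 := by
        obtain ⟨δ, hδ, hmn⟩ := hmin
        have hball : Metric.ball (0 : ℝ) (δ / (2 * R + 1)) ∈ nhds (0 : ℝ) :=
          Metric.ball_mem_nhds _ (by positivity)
        filter_upwards [hball] with s hs
        have hs' : |s| < δ / (2 * R + 1) := by
          rw [← Real.norm_eq_abs]; exact mem_ball_zero_iff.1 hs
        rw [lt_div_iff₀ (by positivity)] at hs'
        have hsup : ∀ (f : ℝ → En n), (∀ t ∈ tsTk T, ‖f t‖ ≤ R) →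
            tsSupNorm (tsTk T) (fun t => s • f t) ≤ |s| * R := by
          intro f hf
          apply Real.sSup_le
          · rintro _ ⟨t, ht, rfl⟩
            simp only []
            rw [norm_smul, Real.norm_eq_abs]
            exact mul_le_mul_of_nonneg_left (hf t ht) (abs_nonneg s)
          · positivity
        obtain ⟨m1, ⟨C1, b1⟩, c1⟩ := h.along hLc hysc hys.2
        obtain ⟨m2, ⟨C2, b2⟩, c2⟩ := h.along hLc (hcy s) (hrd s)
        have e1 := hsup η (fun t ht => (hR3 t ht).trans hRR3)
        have e2 := hsup ψ (fun t ht => (hR4 t ht).trans hRR4)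
        have := hmn (fun t => ys t + s • η t) (fun t => yds t + s • ψ t)
          ⟨fun t ht => (hys.1 t ht).add_smul (hηd t ht) s, hrd s⟩
          (by simp [hηa]) (by simp [hηb])
          (by
            simp only [add_sub_cancel_left]
            nlinarith [abs_nonneg s])
          _ _ (h.exist m1 b1 c1) (h.exist m2 b2 c2)
        simpa using this
      have hz := hmin0.hasDerivAt_eq_zero hder
      -- integration by parts
      have hprod : IsDeltaAntideriv T
          (fun t => inner ℝ (Ly t (ys t) (yds t)) (η t) + inner ℝ (F (tsSigma T t)) (ψ t))
          (fun t => inner ℝ (F t) (η t)) :=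
        fun t ht => (hF t ht).inner_prod (h.tk_sub ht) (hηd t ht)
      have hftc := h.ftc hprod
        ((hLym.inner hηm).add (hFσm.inner hψm)) (C := Cy * R + CF * R)
        (by
          intro t ht
          refine (norm_add_le _ _).trans (add_le_add ?_ ?_)
          · exact (norm_inner_le_norm _ _).trans (mul_le_mul (hCy t ht) ((hR3 t ht).trans hRR3)
              (norm_nonneg _) ((norm_nonneg _).trans (hCy t ht)))
          · exact (norm_inner_le_norm _ _).trans (mul_le_mul (hCFσ t ht) ((hR4 t ht).trans hRR4)
              (norm_nonneg _) ((norm_nonneg _).trans (hCFσ t ht))))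
        (fun t ht hst => ((hLyk t ht hst).inner (hηc t ht)).add
          ((hFσc t ht hst).inner hψc.continuousWithinAt))
      simp only [hηa, hηb, inner_zero_right, sub_zero, ← hτdef] at hftc
      have i1 : ∀ (A B : ℝ → En n) (CA : ℝ), Measurable A → Measurable B → (∀ u, ‖A u‖ ≤ CA) →
          (∀ u, ‖B u‖ ≤ R) → IntervalIntegrable (fun u => inner ℝ (A u) (B u))
            MeasureTheory.volume a b := by
        intro A B CA hA hB hA' hB'
        refine nice_int (hA.inner hB) (C := CA * R) (fun u => ?_) a b
        exact (norm_inner_le_norm _ _).trans (mul_le_mul (hA' u) (hB' u)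
              (norm_nonneg _) ((norm_nonneg _).trans (hA' u)))
      have j1 := i1 _ _ Cy hLym hηm (fun u => hCy _ (h.tau_mem u))
        (fun u => (hR3 _ (h.tau_mem u)).trans hRR3)
      have j2 := i1 _ _ Cv hLvm hψm (fun u => hCv _ (h.tau_mem u))
        (fun u => (hR4 _ (h.tau_mem u)).trans hRR4)
      have j3 := i1 _ _ CF hFσm hψm (fun u => hCFσ _ (h.tau_mem u))
        (fun u => (hR4 _ (h.tau_mem u)).trans hRR4)
      rw [intervalIntegral.integral_add j1 j2] at hz
      rw [intervalIntegral.integral_add j1 j3] at hftc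
      have hint : IntervalIntegrable (fun u => g (τ u) • (Lv (τ u) (ys (τ u)) (yds (τ u))
          - F (tsSigma T (τ u)))) MeasureTheory.volume a b := by
        refine nice_int (hgτm.smul (hLvm.sub hFσm)) (C := D * (Cv + CF)) (fun u => ?_) a b
        have h1 := hD _ (h.tau_mem u)
        change ‖g (τ u) • (Lv (τ u) (ys (τ u)) (yds (τ u)) - F (tsSigma T (τ u)))‖ ≤ _
        rw [norm_smul]
        exact mul_le_mul h1 ((norm_sub_le _ _).trans
          (add_le_add (hCv _ (h.tau_mem u)) (hCFσ _ (h.tau_mem u)))) (norm_nonneg _)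
          ((norm_nonneg _).trans h1)
      have hcomm := (innerSL ℝ w).intervalIntegral_comp_comm hint
      rw [innerSL_apply_apply] at hcomm
      rw [← hcomm]
      have hfin : ∀ u, innerSL ℝ w (g (τ u) • (Lv (τ u) (ys (τ u)) (yds (τ u))
          - F (tsSigma T (τ u)))) = inner ℝ (Lv (τ u) (ys (τ u)) (yds (τ u))) (ψ (τ u))
          - inner ℝ (F (tsSigma T (τ u))) (ψ (τ u)) := by
        intro u
        rw [innerSL_apply_apply, real_inner_comm, ← inner_sub_left, real_inner_smul_left, hψ,
          real_inner_smul_right]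
      simp only [hfin]
      rw [intervalIntegral.integral_sub j2 j3]
      linarith)
  exact ⟨c, fun t ht => by rw [← hc t ht]; abel⟩
end
end

section
/- Suppose y* ∈ C¹_rd(𝕋;ℝⁿ) is a weak local minimizer of 𝓛 with the right endpoint free: there is δ > 0 such that 𝓛[y*] ≤ 𝓛[y] for every y ∈ C¹_rd(𝕋;ℝⁿ) with y(a) = y*(a) and ‖y − y*‖_{1,∞} < δ (no condition is imposed at t = b). Then the natural boundary condition L_v(ρ(b), y*(ρ(b)), y*^Δ(ρ(b))) = 0 holds. -/
open Set Filter

noncomputable section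

lemma sigma_ge (S : Set ℝ) (t : ℝ) : t ≤ tsSigma S t := by
  unfold tsSigma
  split_ifs with h
  · exact le_csInf h fun u hu => hu.2.le
  · exact le_rfl

lemma sigma_gap (S : Set ℝ) {t u : ℝ} (htu : t < u) (hu : u < tsSigma S t) : u ∉ S := by
  intro huS
  have hne : ({s | s ∈ S ∧ t < s}).Nonempty := ⟨u, huS, htu⟩
  unfold tsSigma at hu
  rw [if_pos hne] at hu
  exact absurd (csInf_le ⟨t, fun x hx => hx.2.le⟩ (⟨huS, htu⟩ : u ∈ {s | s ∈ S ∧ t < s}))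
    (not_le.mpr hu)

lemma rho_le (S : Set ℝ) (t : ℝ) : tsRho S t ≤ t := by
  unfold tsRho
  split_ifs with h
  · exact csSup_le h fun u hu => hu.2.le
  · exact le_rfl

lemma rho_gap (S : Set ℝ) {t u : ℝ} (htu : u < t) (hu : tsRho S t < u) : u ∉ S := by
  intro huS
  have hne : ({s | s ∈ S ∧ s < t}).Nonempty := ⟨u, huS, htu⟩
  unfold tsRho at hu
  rw [if_pos hne] at hu
  exact absurd (le_csSup ⟨t, fun x hx => hx.2.le⟩ (⟨huS, htu⟩ : u ∈ {s | s ∈ S ∧ s < t}))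
    (not_le.mpr hu)

lemma sigma_sub {T K : Set ℝ} {c t : ℝ} (hK : K = T ∩ Iic c) (h : tsSigma T t = t) :
    tsSigma K t = t := by
  by_cases hne : ({s | s ∈ K ∧ t < s}).Nonempty
  · obtain ⟨u, huK, htu⟩ := hne
    refine le_antisymm ?_ (sigma_ge K t)
    by_contra! hlt
    have hneT : ({s | s ∈ T ∧ t < s}).Nonempty := ⟨u, by rw [hK] at huK; exact huK.1, htu⟩
    unfold tsSigma at h
    rw [if_pos hneT] at h
    have hm : sInf {s | s ∈ T ∧ t < s} < min u (tsSigma K t) := by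
      rw [h]; exact lt_min htu hlt
    obtain ⟨s, ⟨hsT, hts⟩, hs⟩ := exists_lt_of_csInf_lt hneT hm
    refine sigma_gap K hts (hs.trans_le (min_le_right _ _)) ?_
    rw [hK] at huK ⊢
    exact ⟨hsT, (hs.le.trans (min_le_left _ _)).trans huK.2⟩
  · unfold tsSigma; rw [if_neg hne]

lemma rd_bounded {E : Type*} [NormedAddCommGroup E] {K : Set ℝ} (hKc : IsCompact K) {f : ℝ → E}
    (hf : RdContinuousOn K f) : ∃ B, 0 ≤ B ∧ ∀ t ∈ K, ‖f t‖ ≤ B := by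
  suffices h : ∃ B, ∀ t ∈ K, ‖f t‖ ≤ B by
    obtain ⟨B, hB⟩ := h
    exact ⟨max B 0, le_max_right _ _, fun t ht => (hB t ht).trans (le_max_left _ _)⟩
  have key : ∀ (t : ℝ) (s : Set ℝ) (l : E), Tendsto f (nhdsWithin t s) (nhds l) →
      ∃ B, ∀ᶠ u in nhdsWithin t s, ‖f u‖ ≤ B := by
    intro t s l h
    refine ⟨‖l‖ + 1, ?_⟩
    have := h.norm.eventually (gt_mem_nhds (lt_add_one ‖l‖))
    exact this.mono fun u hu => hu.le
  refine hKc.induction_on (p := fun s => ∃ B, ∀ t ∈ s, ‖f t‖ ≤ B) ⟨0, by simp⟩ ?_ ?_ ?_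
  · rintro s t hst ⟨B, hB⟩
    exact ⟨B, fun u hu => hB u (hst hu)⟩
  · rintro s t ⟨B, hB⟩ ⟨B', hB'⟩
    refine ⟨max B B', ?_⟩
    rintro u (hu | hu)
    · exact (hB u hu).trans (le_max_left _ _)
    · exact (hB' u hu).trans (le_max_right _ _)
  · intro t ht
    obtain ⟨h1, h2⟩ := hf t ht
    have hL : ∃ B, ∀ᶠ u in nhdsWithin t (K ∩ Iio t), ‖f u‖ ≤ B := by
      by_cases hr : tsRho K t = t
      · obtain ⟨l, hl⟩ := h2 hr
        exact key _ _ _ hl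
      · refine ⟨0, ?_⟩
        have hlt : tsRho K t < t := lt_of_le_of_ne (rho_le K t) hr
        filter_upwards [self_mem_nhdsWithin, mem_nhdsWithin_of_mem_nhds (Ioi_mem_nhds hlt)]
          with u hu hu'
        exact absurd hu.1 (rho_gap K hu.2 hu')
    have hR : ∃ B, ∀ᶠ u in nhdsWithin t (K ∩ Ioi t), ‖f u‖ ≤ B := by
      by_cases hr : tsSigma K t = t
      · exact key _ _ _ ((h1 hr).mono inter_subset_left)
      · refine ⟨0, ?_⟩
        have hlt : t < tsSigma K t := lt_of_le_of_ne (sigma_ge K t) (Ne.symm hr)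
        filter_upwards [self_mem_nhdsWithin, mem_nhdsWithin_of_mem_nhds (Iio_mem_nhds hlt)]
          with u hu hu'
        exact absurd hu.1 (sigma_gap K hu.2 hu')
    obtain ⟨B1, hB1⟩ := hL
    obtain ⟨B2, hB2⟩ := hR
    rw [eventually_nhdsWithin_iff] at hB1 hB2
    refine ⟨{u | u ∈ K ∧ ‖f u‖ ≤ max (max B1 B2) ‖f t‖}, ?_, max (max B1 B2) ‖f t‖,
      fun u hu => hu.2⟩
    filter_upwards [self_mem_nhdsWithin, mem_nhdsWithin_of_mem_nhds hB1,
      mem_nhdsWithin_of_mem_nhds hB2] with u hu h1 h2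
    refine ⟨hu, ?_⟩
    rcases lt_trichotomy u t with h | h | h
    · exact (h1 ⟨hu, h⟩).trans ((le_max_left _ _).trans (le_max_left _ _))
    · rw [h]; exact le_max_right _ _
    · exact (h2 ⟨hu, h⟩).trans ((le_max_right _ _).trans (le_max_left _ _))

def piK (K : Set ℝ) (a s : ℝ) : ℝ := sSup (K ∩ Iic (max s a))

lemma piK_mem {K : Set ℝ} (hKc : IsCompact K) {a : ℝ} (ha : a ∈ K) (s : ℝ) :
    piK K a s ∈ K ∧ piK K a s ≤ max s a := by
  have : piK K a s ∈ K ∩ Iic (max s a) :=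
    (hKc.inter_right isClosed_Iic).sSup_mem ⟨a, ha, mem_Iic.mpr (le_max_right _ _)⟩
  exact this

lemma piK_ge {K : Set ℝ} {a s u : ℝ} (hu : u ∈ K) (hus : u ≤ max s a) :
    u ≤ piK K a s :=
  le_csSup ⟨max s a, fun _ hx => hx.2⟩ ⟨hu, hus⟩

/-- if no point of K in (t, s], piK s = t. -/
lemma piK_eq {K : Set ℝ} (hKc : IsCompact K) {a : ℝ} (ha : a ∈ K) {s t : ℝ} (ht : t ∈ K)
    (hts : t ≤ max s a) (h : ∀ u, t < u → u ≤ max s a → u ∉ K) : piK K a s = t := by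
  obtain ⟨h1, h2⟩ := piK_mem hKc ha s
  refine le_antisymm ?_ (piK_ge ht hts)
  by_contra! hlt
  exact h _ hlt h2 h1

lemma measurable_of_right_cont {f : ℝ → ℝ}
    (hf : ∀ x, ∀ ε > 0, ∃ δ > 0, ∀ y, x < y → y < x + δ → |f y - f x| < ε) : Measurable f := by
  have hm : ∀ k : ℕ, Measurable (fun x : ℝ => f (((⌊((k : ℝ) + 1) * x⌋ : ℝ) + 1) / ((k : ℝ) + 1))) := by
    intro k
    have h1 : Measurable (fun z : ℤ => f (((z : ℝ) + 1) / ((k : ℝ) + 1))) := measurable_from_top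
    have h2 : Measurable (fun x : ℝ => ⌊((k : ℝ) + 1) * x⌋) :=
      Int.measurable_floor.comp (measurable_const.mul measurable_id)
    exact h1.comp h2
  refine measurable_of_tendsto_metrizable hm ?_
  rw [tendsto_pi_nhds]
  intro x
  rw [Metric.tendsto_atTop]
  intro ε hε
  obtain ⟨δ, hδ, h⟩ := hf x ε hε
  obtain ⟨N, hN⟩ := exists_nat_one_div_lt hδ
  refine ⟨N, fun k hk => ?_⟩
  rw [Real.dist_eq]
  have hk0 : (0 : ℝ) < (k : ℝ) + 1 := by positivity
  have hNk : (N : ℝ) ≤ k := by exact_mod_cast hk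
  apply h
  · rw [lt_div_iff₀ hk0]
    linarith [Int.lt_floor_add_one (((k : ℝ) + 1) * x)]
  · have h1 : 1 / ((k : ℝ) + 1) < δ := by
      refine lt_of_le_of_lt ?_ hN
      apply one_div_le_one_div_of_le <;> [positivity; linarith]
    have h2 := Int.floor_le (((k : ℝ) + 1) * x)
    have : (((⌊((k : ℝ) + 1) * x⌋ : ℝ) + 1) / ((k : ℝ) + 1)) ≤ x + 1 / ((k : ℝ) + 1) := by
      rw [div_le_iff₀ hk0]
      field_simp
      linarith
    linarith

lemma ext_right_cont {K : Set ℝ} (hKc : IsCompact K) {a : ℝ} (ha : a ∈ K) {f : ℝ → ℝ}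
    (hf : RdContinuousOn K f) : ∀ x, ∀ ε > 0, ∃ δ > 0, ∀ y, x < y → y < x + δ →
      |f (piK K a y) - f (piK K a x)| < ε := by
  intro x ε hε
  obtain ⟨h1, h2⟩ := piK_mem hKc ha x
  set t := piK K a x with ht
  -- const case
  have hconst : ∀ m, max x a < m → (∀ u, t < u → u < m → u ∉ K) → ∃ δ > 0, ∀ y, x < y →
      y < x + δ → |f (piK K a y) - f t| < ε := by
    intro m hm hno
    refine ⟨m - max x a, by linarith, fun y hxy hy => ?_⟩
    have hym : max y a < m := by
      apply max_lt
      · linarith [le_max_left x a]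
      · linarith [le_max_right x a]
    have : piK K a y = t := by
      refine piK_eq hKc ha h1 (h2.trans (max_le_max_right a hxy.le)) ?_
      intro u hu hu'
      exact hno u hu (hu'.trans_lt hym)
    rw [this]; simpa using hε
  have hnox : ∀ u, t < u → u ≤ max x a → u ∉ K := by
    intro u hu hu' huK
    exact absurd (piK_ge huK hu') (not_le.mpr hu)
  rcases lt_or_eq_of_le h2 with hlt | heq
  · have hx : max x a ∉ K := hnox _ hlt le_rfl
    have : Kᶜ ∈ nhds (max x a) := hKc.isClosed.isOpen_compl.mem_nhds hx
    obtain ⟨δ, hδ, hb⟩ := Metric.mem_nhds_iff.mp this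
    refine hconst (max x a + δ) (by linarith) ?_
    intro u hu hu'
    rcases le_or_gt u (max x a) with h | h
    · exact hnox u hu h
    · apply hb
      rw [Metric.mem_ball, Real.dist_eq, abs_lt]; constructor <;> linarith
  · by_cases hs : tsSigma K t = t
    · have hc := (hf t h1).1 hs
      rw [Metric.continuousWithinAt_iff] at hc
      obtain ⟨δ, hδ, hc⟩ := hc ε hε
      refine ⟨δ, hδ, fun y hxy hy => ?_⟩
      obtain ⟨g1, g2⟩ := piK_mem hKc ha y
      have g3 : t ≤ piK K a y := piK_ge h1 (h2.trans (max_le_max_right a hxy.le))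
      have := hc g1 (by
        rw [Real.dist_eq, abs_lt]
        have : max y a < t + δ := by
          rw [heq]
          apply max_lt
          · linarith [le_max_left x a]
          · linarith [le_max_right x a]
        constructor <;> linarith)
      rwa [Real.dist_eq] at this
    · have hlt : t < tsSigma K t := lt_of_le_of_ne (sigma_ge K t) (Ne.symm hs)
      exact hconst (tsSigma K t) (heq ▸ hlt) (fun u hu hu' => sigma_gap K hu hu')

lemma ext_integrable {K : Set ℝ} (hKc : IsCompact K) {a : ℝ} (ha : a ∈ K) {f : ℝ → ℝ}
    (hf : RdContinuousOn K f) (x y : ℝ) :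
    IntervalIntegrable (fun s => f (piK K a s)) MeasureTheory.volume x y := by
  obtain ⟨B, _, hB⟩ := rd_bounded hKc hf
  have hm := measurable_of_right_cont (ext_right_cont hKc ha hf)
  refine IntervalIntegrable.mono_fun (f := fun _ => B) (by simp) hm.aestronglyMeasurable ?_
  refine Eventually.of_forall fun s => ?_
  exact (hB _ (piK_mem hKc ha s).1).trans (le_abs_self B)

lemma ext_antideriv {T K : Set ℝ} {c a : ℝ} (hK : K = T ∩ Iic c) (hKc : IsCompact K) (ha : a ∈ K)
    (hac : ∀ t ∈ K, a ≤ t) {f : ℝ → ℝ} (hf : RdContinuousOn K f) {t : ℝ} (ht : t ∈ K) :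
    deltaDiffAt T (fun x => ∫ s in a..x, f (piK K a s)) t (f t) := by
  intro ε hε
  have hI := ext_integrable hKc ha hf
  have htc : t ≤ c := by rw [hK] at ht; exact ht.2
  have hat := hac t ht
  obtain ⟨B, hB0, hB⟩ := rd_bounded hKc hf
  have e : ∀ s, ((∫ s in a..(tsSigma T t), f (piK K a s)) - (∫ s in a..s, f (piK K a s))
      - (tsSigma T t - s) • f t) = ∫ u in s..(tsSigma T t), (f (piK K a u) - f t) := by
    intro s
    rw [intervalIntegral.integral_sub (hI _ _) (by simp), intervalIntegral.integral_const,
      intervalIntegral.integral_interval_sub_left (hI _ _) (hI _ _)]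
  have hsT : ∀ s ∈ T, s ≤ t → s ∈ K := fun s hs hst => by
    rw [hK]; exact ⟨hs, hst.trans htc⟩
  by_cases hs : tsSigma T t = t
  · have hs' := sigma_sub hK hs
    have hc := (hf t ht).1 hs'
    rw [Metric.continuousWithinAt_iff] at hc
    obtain ⟨δ, hδ, hc⟩ := hc ε hε
    refine ⟨δ, hδ, ?_⟩
    rintro s ⟨hsS, hs1, hs2⟩
    simp only [e]
    rw [hs]
    apply intervalIntegral.norm_integral_le_of_norm_le_const
    intro u hu
    obtain ⟨g1, g2⟩ := piK_mem hKc ha u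
    have := hc g1 (by
      rw [Real.dist_eq, abs_lt]
      rcases le_total s t with h | h
      · rw [uIoc_of_le h] at hu
        have hsK := hsT s hsS h
        have := piK_ge (a := a) (s := u) hsK (hu.1.le.trans (le_max_left _ _))
        have h3 : max u a = u := max_eq_left (by linarith [hac s hsK, hu.1])
        rw [h3] at g2
        constructor <;> linarith [hu.2]
      · rw [uIoc_of_ge h] at hu
        have := piK_ge (a := a) (s := u) ht (hu.1.le.trans (le_max_left _ _))
        have h3 : max u a = u := max_eq_left (by linarith [hu.1])
        rw [h3] at g2
        constructor <;> linarith [hu.2])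
    rw [Real.dist_eq] at this
    exact this.le
  · have hlt : t < tsSigma T t := lt_of_le_of_ne (sigma_ge T t) (Ne.symm hs)
    set σ := tsSigma T t with hσ
    refine ⟨min (σ - t) (ε * (σ - t) / (2 * B + 1)), lt_min (by linarith)
      (div_pos (mul_pos hε (by linarith)) (by linarith)), ?_⟩
    rintro s ⟨hsS, hs1, hs2⟩
    have hst : s ≤ t := by
      by_contra! h
      exact sigma_gap T h (by linarith [min_le_left (σ - t) (ε * (σ - t) / (2 * B + 1))]) hsS
    simp only [e]
    have hz : ∫ u in t..σ, (f (piK K a u) - f t) = 0 := by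
      have : ∫ u in t..σ, (f (piK K a u) - f t) = ∫ u in t..σ, (0 : ℝ) := by
        apply intervalIntegral.integral_congr_Ioo_of_le hlt.le
        intro u hu
        have : piK K a u = t := by
          have h3 : max u a = u := max_eq_left (by linarith [hu.1])
          refine piK_eq hKc ha ht (hu.1.le.trans (le_max_left _ _)) ?_
          intro v hv hv' hvK
          rw [h3] at hv'
          rw [hK] at hvK
          exact sigma_gap T hv (hv'.trans_lt hu.2) hvK.1
        simp [this]
      rw [this]; simp
    rw [← intervalIntegral.integral_add_adjacent_intervals (b := t)
      ((hI _ _).sub (by simp)) ((hI _ _).sub (by simp)), hz, add_zero]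
    have h1 : ‖∫ u in s..t, (f (piK K a u) - f t)‖ ≤ (2 * B) * |t - s| := by
      apply intervalIntegral.norm_integral_le_of_norm_le_const
      intro u hu
      have := norm_sub_le (f (piK K a u)) (f t)
      linarith [hB _ (piK_mem hKc ha u).1, hB t ht]
    have h2 : t - s ≤ ε * (σ - t) / (2 * B + 1) := by
      linarith [min_le_right (σ - t) (ε * (σ - t) / (2 * B + 1))]
    rw [le_div_iff₀ (by linarith)] at h2
    rw [abs_of_nonneg (by linarith)] at h1 ⊢
    nlinarith

lemma deltaDiff_cont {E : Type*} [NormedAddCommGroup E] [NormedSpace ℝ E] {T : Set ℝ}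
    {f : ℝ → E} {t : ℝ} {d : E} (ht : t ∈ T) (h : deltaDiffAt T f t d) :
    ContinuousWithinAt f T t := by
  rw [Metric.continuousWithinAt_iff]
  intro ε hε
  set m := tsSigma T t - t with hm
  have hm0 : 0 ≤ m := by linarith [sigma_ge T t]
  have hp : 0 < ε / (2 * (2 * m + 1)) := by positivity
  obtain ⟨δ, hδ, h⟩ := h _ hp
  have hq : 0 < ε / (2 * (‖d‖ + 1)) := by positivity
  refine ⟨min δ (min 1 (ε / (2 * (‖d‖ + 1)))), by positivity, ?_⟩
  intro s hs hst
  rw [Real.dist_eq, lt_min_iff, lt_min_iff] at hst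
  obtain ⟨s1, s2, s3⟩ := hst
  have a1 := h s ⟨hs, by rw [abs_lt] at s1; constructor <;> linarith⟩
  have a2 := h t ⟨ht, by constructor <;> linarith⟩
  rw [← hm, abs_of_nonneg hm0] at a2
  have a3 : |tsSigma T t - s| ≤ m + 1 := by
    rw [abs_lt] at s2
    rw [abs_le]; constructor <;> linarith
  have e : f s - f t = (f (tsSigma T t) - f t - m • d)
      - (f (tsSigma T t) - f s - (tsSigma T t - s) • d) + (s - t) • d := by
    rw [hm]; module
  rw [dist_eq_norm, e]
  have n1 := norm_add_le ((f (tsSigma T t) - f t - m • d)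
      - (f (tsSigma T t) - f s - (tsSigma T t - s) • d)) ((s - t) • d)
  have n2 := norm_sub_le (f (tsSigma T t) - f t - m • d)
      (f (tsSigma T t) - f s - (tsSigma T t - s) • d)
  rw [norm_smul, Real.norm_eq_abs] at n1
  rw [lt_div_iff₀ (by positivity)] at s3
  have n3 : ε / (2 * (2 * m + 1)) * |tsSigma T t - s| ≤ ε / (2 * (2 * m + 1)) * (m + 1) :=
    mul_le_mul_of_nonneg_left a3 hp.le
  have n4 : ε / (2 * (2 * m + 1)) * (m + 1) + ε / (2 * (2 * m + 1)) * m = ε / 2 := by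
    field_simp; ring
  have n5 := abs_nonneg (s - t)
  nlinarith

lemma rd_comp {n : ℕ} {T K : Set ℝ} (hKT : K ⊆ T) {L : ℝ → En n → En n → ℝ}
    (hLc : ContinuousOn (fun p : ℝ × En n × En n => L p.1 p.2.1 p.2.2)
      (T ×ˢ (univ : Set (En n × En n)))) {y yd : ℝ → En n} (hy : ContinuousOn y K)
    (hyd : RdContinuousOn K yd) : RdContinuousOn K (fun t => L t (y t) (yd t)) := by
  intro t ht
  obtain ⟨h1, h2⟩ := hyd t ht
  have gen : ∀ (s : Set ℝ) (l : En n), s ⊆ K → Tendsto yd (nhdsWithin t s) (nhds l) →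
      Tendsto (fun t => L t (y t) (yd t)) (nhdsWithin t s) (nhds (L t (y t) l)) := by
    intro s l hs hl
    have hc := hLc (t, y t, l) ⟨hKT ht, mem_univ _⟩
    have : Tendsto (fun u => ((u, y u, yd u) : ℝ × En n × En n)) (nhdsWithin t s)
        (nhdsWithin (t, y t, l) (T ×ˢ (univ : Set (En n × En n)))) := by
      refine tendsto_nhdsWithin_iff.mpr ⟨?_, ?_⟩
      · exact (tendsto_id.mono_left nhdsWithin_le_nhds).prodMk_nhds
          ((((hy t ht).mono hs) : Tendsto _ _ _).prodMk_nhds hl)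
      · filter_upwards [self_mem_nhdsWithin] with u hu
        exact ⟨hKT (hs hu), mem_univ _⟩
    exact Tendsto.comp hc this
  exact ⟨fun hs => gen K _ subset_rfl (h1 hs), fun hr => by
    obtain ⟨l, hl⟩ := h2 hr
    exact ⟨_, gen _ l inter_subset_left hl⟩⟩

lemma grad_mvt {n : ℕ} {f : En n → ℝ} {g : En n → En n} (hf : ∀ z, HasGradientAt f (g z) z)
    (x w : En n) (C : ℝ) (h : ∀ θ ∈ Icc (0 : ℝ) 1, inner ℝ (g (x + θ • w)) w ≤ C) :
    f (x + w) - f x ≤ C := by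
  have hd : ∀ θ : ℝ, HasDerivAt (fun θ : ℝ => f (x + θ • w)) (inner ℝ (g (x + θ • w)) w) θ := by
    intro θ
    have h1 := (hf (x + θ • w)).hasFDerivAt
    have h2 : HasDerivAt (fun θ : ℝ => x + θ • w) w θ := by
      simpa using ((hasDerivAt_id θ).smul_const w).const_add x
    have := h1.comp_hasDerivAt θ h2
    simp only [InnerProductSpace.toDual_apply_apply] at this
    exact this
  obtain ⟨θ, hθ, he⟩ := exists_hasDerivAt_eq_slope (fun θ : ℝ => f (x + θ • w)) _
    (zero_lt_one' ℝ) (fun θ _ => (hd θ).continuousAt.continuousWithinAt) (fun θ _ => hd θ)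
  have := h θ ⟨hθ.1.le, hθ.2.le⟩
  rw [he] at this
  simpa using this

lemma ind_integrable (l r x y : ℝ) :
    IntervalIntegrable (indicator (Icc l r) (fun _ => (1 : ℝ))) MeasureTheory.volume x y := by
  refine IntervalIntegrable.mono_fun (f := fun _ => (1 : ℝ)) (by simp)
    (measurable_const.indicator measurableSet_Icc).aestronglyMeasurable ?_
  refine Eventually.of_forall fun s => ?_
  by_cases h : s ∈ Icc l r <;> simp [h]

lemma ind_integral {l r x y : ℝ} (hlr : l ≤ r) (hxy : x ≤ y) :
    ∫ s in x..y, indicator (Icc l r) (fun _ => (1 : ℝ)) s ≤ r - l := by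
  rw [intervalIntegral.integral_of_le hxy, MeasureTheory.integral_indicator measurableSet_Icc,
    MeasureTheory.setIntegral_const, smul_eq_mul, mul_one]
  calc _ ≤ MeasureTheory.volume.real (Icc l r) := by
        rw [MeasureTheory.measureReal_restrict_apply measurableSet_Icc]
        exact MeasureTheory.measureReal_mono inter_subset_left (by simp)
    _ = r - l := by simp [Real.volume_real_Icc, hlr]

lemma rd_of_cont {E : Type*} [NormedAddCommGroup E] {K : Set ℝ} {f : ℝ → E} (hf : Continuous f) :
    RdContinuousOn K f := fun t _ =>
  ⟨fun _ => hf.continuousWithinAt, fun _ => ⟨f t, hf.continuousWithinAt⟩⟩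

lemma rd_add {E : Type*} [NormedAddCommGroup E] {K : Set ℝ} {f g : ℝ → E}
    (hf : RdContinuousOn K f) (hg : Continuous g) :
    RdContinuousOn K (fun t => f t + g t) := fun t ht =>
  ⟨fun h => ((hf t ht).1 h).add hg.continuousWithinAt, fun h => by
    obtain ⟨l, hl⟩ := (hf t ht).2 h
    exact ⟨l + g t, hl.add hg.continuousWithinAt⟩⟩

lemma deltaDiff_add {E : Type*} [NormedAddCommGroup E] [NormedSpace ℝ E] {T : Set ℝ}
    {f : ℝ → E} {t : ℝ} {d : E} (h : deltaDiffAt T f t d) {Φ : ℝ → ℝ} {φ : ℝ}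
    (hΦ : deltaDiffAt T Φ t φ) (w : E) :
    deltaDiffAt T (fun s => f s + Φ s • w) t (d + φ • w) := by
  intro ε hε
  obtain ⟨δ1, h1, H1⟩ := h (ε / 2) (by linarith)
  obtain ⟨δ2, h2, H2⟩ := hΦ (ε / (2 * (‖w‖ + 1))) (by positivity)
  refine ⟨min δ1 δ2, lt_min h1 h2, ?_⟩
  rintro s ⟨hs, hs1, hs2⟩
  have := min_le_left δ1 δ2
  have := min_le_right δ1 δ2
  have a1 := H1 s ⟨hs, by linarith, by linarith⟩
  have a2 := H2 s ⟨hs, by linarith, by linarith⟩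
  have e : (f (tsSigma T t) + Φ (tsSigma T t) • w) - (f s + Φ s • w)
      - (tsSigma T t - s) • (d + φ • w) = (f (tsSigma T t) - f s - (tsSigma T t - s) • d)
      + (Φ (tsSigma T t) - Φ s - (tsSigma T t - s) • φ) • w := by
    simp only [smul_eq_mul]; module
  simp only [e]
  refine (norm_add_le _ _).trans ?_
  rw [norm_smul]
  have a3 := mul_le_mul_of_nonneg_right a2 (norm_nonneg w)
  have a4 : ε / (2 * (‖w‖ + 1)) * |tsSigma T t - s| * ‖w‖ ≤ ε / 2 * |tsSigma T t - s| := by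
    have : ε / (2 * (‖w‖ + 1)) * ‖w‖ ≤ ε / 2 := by
      rw [div_mul_eq_mul_div, div_le_div_iff₀ (by positivity) (by positivity)]
      nlinarith [norm_nonneg w]
    nlinarith [abs_nonneg (tsSigma T t - s)]
  linarith

lemma Tk_eq {T : Set ℝ} {b : ℝ} (hbT : b ∈ T) (hTb : ∀ t ∈ T, t ≤ b) :
    tsTk T = T ∩ Iic (tsRho T b) := by
  have hs : sSup T = b := le_antisymm (csSup_le ⟨b, hbT⟩ hTb) (le_csSup ⟨b, hTb⟩ hbT)
  ext t
  simp only [tsTk, hs, Set.mem_sdiff, mem_Ioc, not_and, mem_inter_iff, mem_Iic]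
  constructor
  · rintro ⟨h1, h2⟩
    refine ⟨h1, ?_⟩
    by_contra! h
    exact h2 h (hTb t h1)
  · rintro ⟨h1, h2⟩
    exact ⟨h1, fun h => absurd h2 (not_le.mpr h)⟩

/-- the tent function -/
def tent (c r u : ℝ) : ℝ := max 0 (1 - |u - c| / r)

lemma tent_cont (c r : ℝ) : Continuous (tent c r) := by unfold tent; fun_prop
lemma tent_nonneg (c r u : ℝ) : 0 ≤ tent c r u := le_max_left _ _
lemma tent_le {c r : ℝ} (hr : 0 < r) (u : ℝ) : tent c r u ≤ 1 := by
  unfold tent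
  have : 0 ≤ |u - c| / r := by positivity
  exact max_le zero_le_one (by linarith)
lemma tent_self (c r : ℝ) : tent c r c = 1 := by simp [tent]
lemma tent_zero {c r u : ℝ} (hr : 0 < r) (h : r ≤ |u - c|) : tent c r u = 0 := by
  unfold tent
  apply max_eq_left
  have := (one_le_div hr).mpr h
  linarith
lemma tent_half {c r u : ℝ} (hr : 0 < r) (h : |u - c| ≤ r / 2) : 1 / 2 ≤ tent c r u := by
  unfold tent
  refine le_trans ?_ (le_max_right _ _)
  have : |u - c| / r ≤ 1 / 2 := by rw [div_le_iff₀ hr]; linarith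
  linarith

/-- properties of the primitive of the tent -/
lemma tent_prim {K : Set ℝ} (hKc : IsCompact K) {a b c r : ℝ} (hr : 0 < r)
    (ha : a ∈ K) (hc : c ∈ K) (hKa : ∀ t ∈ K, a ≤ t) (hKb : ∀ t ∈ K, t ≤ c) (hcb : c ≤ b)
    (hd : ∀ r > 0, ∃ t ∈ K, t < b ∧ c - r < t) :
    ∃ Φ : ℝ → ℝ, Φ = (fun x => ∫ s in a..x, tent c r (piK K a s)) ∧
      Φ a = 0 ∧ 0 < Φ b ∧ (∀ x ∈ Icc a b, 0 ≤ Φ x ∧ Φ x ≤ Φ b ∧ Φ x ≤ b - a) ∧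
      ∀ s ∈ Icc a b, Φ (piK K a s) ≤
        Φ b * indicator (Icc (c - r) c) (fun _ => (1 : ℝ)) s + r * tent c r (piK K a s) := by
  have hI : ∀ x y, IntervalIntegrable (fun s => tent c r (piK K a s)) MeasureTheory.volume x y :=
    ext_integrable hKc ha (rd_of_cont (tent_cont c r))
  have hac := hKa c hc
  refine ⟨_, rfl, by simp, ?_⟩
  have hmono : ∀ x y, x ≤ y → (∫ s in a..x, tent c r (piK K a s)) ≤
      ∫ s in a..y, tent c r (piK K a s) := by
    intro x y hxy
    rw [← sub_nonneg, intervalIntegral.integral_interval_sub_left (hI _ _) (hI _ _)]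
    exact intervalIntegral.integral_nonneg hxy fun u _ => tent_nonneg _ _ _
  have hpi : ∀ s, a ≤ s → piK K a s ∈ K ∧ piK K a s ≤ s := by
    intro s hs
    have := piK_mem hKc ha s
    rwa [max_eq_left hs] at this
  have hind : ∀ s ∈ Icc a c, tent c r (piK K a s) ≤ indicator (Icc (c - r) c) (fun _ => (1 : ℝ)) s := by
    intro s hs
    by_cases h : c - r ≤ s
    · rw [indicator_of_mem (mem_Icc.mpr ⟨h, hs.2⟩)]
      exact tent_le hr _
    · rw [tent_zero hr]
      · exact indicator_nonneg (fun _ _ => zero_le_one) _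
      · rw [abs_sub_comm]
        exact le_trans (by linarith [(hpi s hs.1).2]) (le_abs_self _)
  refine ⟨?_, ?_, ?_⟩
  · obtain ⟨t, htK, htb, htc⟩ := hd (r / 2) (by linarith)
    have h0 := hmono a t (hKa t htK)
    rw [intervalIntegral.integral_same] at h0
    have h1 : ∫ s in t..b, (1 / 2 : ℝ) ≤ ∫ s in t..b, tent c r (piK K a s) := by
      refine intervalIntegral.integral_mono_on htb.le (by simp) (hI _ _) ?_
      intro s hs
      apply tent_half hr
      have g1 := piK_ge (a := a) (s := s) htK (hs.1.trans (le_max_left _ _))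
      have g2 := hKb _ (piK_mem hKc ha s).1
      rw [abs_le]; constructor <;> linarith
    rw [intervalIntegral.integral_const, smul_eq_mul] at h1
    have h2 := intervalIntegral.integral_add_adjacent_intervals (hI a t) (hI t b)
    linarith
  · intro x hx
    refine ⟨?_, hmono x b hx.2, ?_⟩
    · have := hmono a x hx.1
      rwa [intervalIntegral.integral_same] at this
    · have : (∫ s in a..x, tent c r (piK K a s)) ≤ ∫ s in a..x, (1 : ℝ) :=
        intervalIntegral.integral_mono_on hx.1 (hI _ _) (by simp) fun s _ => tent_le hr _
      rw [intervalIntegral.integral_const, smul_eq_mul] at this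
      linarith [hx.2]
  · intro s hs
    obtain ⟨g1, g2⟩ := hpi s hs.1
    have hΦb : 0 ≤ ∫ s in a..b, tent c r (piK K a s) := by
      have := hmono a b (hac.trans hcb)
      rwa [intervalIntegral.integral_same] at this
    rcases le_or_gt c s with h | h
    · have hp : piK K a s = c := le_antisymm (hKb _ g1) (piK_ge hc (h.trans (le_max_left _ _)))
      simp only [hp, tent_self]
      have h1 : (∫ s in a..c, tent c r (piK K a s)) ≤ r := by
        calc _ ≤ ∫ s in a..c, indicator (Icc (c - r) c) (fun _ => (1 : ℝ)) s :=
              intervalIntegral.integral_mono_on hac (hI _ _) (ind_integrable _ _ _ _) hind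
          _ ≤ c - (c - r) := ind_integral (by linarith) hac
          _ = r := by ring
      have : 0 ≤ indicator (Icc (c - r) c) (fun _ => (1 : ℝ)) s :=
        indicator_nonneg (fun _ _ => zero_le_one) _
      have := mul_nonneg hΦb this
      linarith
    · have hrt := mul_nonneg hr.le (tent_nonneg c r (piK K a s))
      by_cases h' : c - r ≤ s
      · rw [indicator_of_mem (mem_Icc.mpr ⟨h', h.le⟩)]
        have := hmono (piK K a s) b (g2.trans hs.2)
        linarith
      · rw [indicator_of_notMem (fun hh => h' hh.1), mul_zero, zero_add]
        have : (∫ u in a..(piK K a s), tent c r (piK K a u)) ≤ ∫ u in a..(piK K a s), (0 : ℝ) := by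
          refine intervalIntegral.integral_mono_on (hKa _ g1) (hI _ _) (by simp) ?_
          intro u hu
          rw [tent_zero hr]
          rw [abs_sub_comm]
          exact le_trans (by linarith [(hpi u hu.1).2, hu.2]) (le_abs_self _)
        rw [intervalIntegral.integral_zero] at this
        linarith

theorem natural_boundary_condition_right_endpoint_free
    {n : ℕ} (hn : 1 ≤ n)
    (T₀ : Set ℝ) (hT₀closed : IsClosed T₀)
    (a b : ℝ) (ha : a ∈ T₀) (hb : b ∈ T₀) (hab : a < b)
    (T : Set ℝ) (hT : T = Icc a b ∩ T₀)
    (hT3 : ∃ c ∈ T, c ≠ a ∧ c ≠ b)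
    (L : ℝ → En n → En n → ℝ) (Ly Lv : ℝ → En n → En n → En n)
    (hLc : ContinuousOn (fun p : ℝ × En n × En n => L p.1 p.2.1 p.2.2)
      (T ×ˢ (univ : Set (En n × En n))))
    (hLC2 : ∀ t ∈ T, ContDiff ℝ 2 (fun p : En n × En n => L t p.1 p.2))
    (hLy : ∀ t ∈ T, ∀ y v : En n, HasGradientAt (fun z => L t z v) (Ly t y v) y)
    (hLv : ∀ t ∈ T, ∀ y v : En n, HasGradientAt (fun z => L t y z) (Lv t y v) v)
    (hLyc : ContinuousOn (fun p : ℝ × En n × En n => Ly p.1 p.2.1 p.2.2)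
      (T ×ˢ (univ : Set (En n × En n))))
    (hLvc : ContinuousOn (fun p : ℝ × En n × En n => Lv p.1 p.2.1 p.2.2)
      (T ×ˢ (univ : Set (En n × En n))))
    (ys yds : ℝ → En n) (hys : C1rd T ys yds)
    (hmin : ∃ δ > 0, ∀ y yd : ℝ → En n, C1rd T y yd →
      y a = ys a →
      tsSupNorm (tsTk T) (fun t => y t - ys t)
        + tsSupNorm (tsTk T) (fun t => yd t - yds t) < δ →
      ∀ F G : ℝ → ℝ,
        IsDeltaAntideriv T (fun t => L t (ys t) (yds t)) F →
        IsDeltaAntideriv T (fun t => L t (y t) (yd t)) G →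
        F b - F a ≤ G b - G a) :
    Lv (tsRho T b) (ys (tsRho T b)) (yds (tsRho T b)) = 0 := by
  by_contra hp0
  set c := tsRho T b with hcdef
  set p := Lv c (ys c) (yds c) with hp
  have hpn : 0 < ‖p‖ := norm_pos_iff.mpr hp0
  have haT : a ∈ T := by rw [hT]; exact ⟨⟨le_rfl, hab.le⟩, ha⟩
  have hbT : b ∈ T := by rw [hT]; exact ⟨⟨hab.le, le_rfl⟩, hb⟩
  have hTa : ∀ t ∈ T, a ≤ t := fun t ht => by rw [hT] at ht; exact ht.1.1
  have hTb : ∀ t ∈ T, t ≤ b := fun t ht => by rw [hT] at ht; exact ht.1.2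
  have hTc : IsCompact T := by rw [hT]; exact isCompact_Icc.inter_right hT₀closed
  have hKeq : tsTk T = T ∩ Iic c := Tk_eq hbT hTb
  have hne : ({s | s ∈ T ∧ s < b}).Nonempty := ⟨a, haT, hab⟩
  have hbdd : BddAbove {s | s ∈ T ∧ s < b} := ⟨b, fun x hx => hx.2.le⟩
  have hcs : c = sSup {s | s ∈ T ∧ s < b} := by
    rw [hcdef]; unfold tsRho; rw [if_pos hne]
  have hcT : c ∈ T := by
    have h1 := csSup_mem_closure hne hbdd
    rw [← hcs] at h1
    exact hTc.isClosed.closure_subset_iff.mpr (fun x hx => hx.1) h1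
  have hac : a ≤ c := hTa c hcT
  have hcb : c ≤ b := hTb c hcT
  generalize hKdef : tsTk T = K at *
  have hKT : K ⊆ T := by rw [hKeq]; exact inter_subset_left
  have hKc : IsCompact K := by rw [hKeq]; exact hTc.inter_right isClosed_Iic
  have haK : a ∈ K := by rw [hKeq]; exact ⟨haT, hac⟩
  have hcK : c ∈ K := by rw [hKeq]; exact ⟨hcT, mem_Iic.mpr le_rfl⟩
  have hKa : ∀ t ∈ K, a ≤ t := fun t ht => hTa t (hKT ht)
  have hKb : ∀ t ∈ K, t ≤ c := fun t ht => by rw [hKeq] at ht; exact ht.2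
  have hd : ∀ r > 0, ∃ t ∈ K, t < b ∧ c - r < t := by
    intro r hr
    obtain ⟨t, ht, htc⟩ := exists_lt_of_lt_csSup hne (by rw [← hcs]; linarith : c - r < _)
    refine ⟨t, ?_, ht.2, htc⟩
    rw [hKeq]
    exact ⟨ht.1, by rw [mem_Iic, hcs]; exact le_csSup hbdd ht⟩
  unfold C1rd at hys hmin
  unfold IsDeltaAntideriv at hmin
  rw [hKdef] at hys hmin
  obtain ⟨hys1, hys2⟩ := hys
  have hysc : ContinuousOn ys K := fun t ht =>
    (deltaDiff_cont (hKT ht) (hys1 t ht)).mono hKT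
  obtain ⟨δ, hδ, hmin⟩ := hmin
  obtain ⟨B1, hB10, hB1⟩ : ∃ B, 0 ≤ B ∧ ∀ t ∈ K, ‖ys t‖ ≤ B := by
    obtain ⟨B, hB⟩ := hKc.exists_bound_of_continuousOn hysc
    exact ⟨B, (norm_nonneg _).trans (hB a haK), hB⟩
  obtain ⟨B2, hB20, hB2⟩ := rd_bounded hKc hys2
  obtain ⟨C, hC0, hC⟩ : ∃ C, 0 ≤ C ∧ ∀ t ∈ T, ∀ y v : En n, ‖y‖ ≤ B1 + 1 → ‖v‖ ≤ B2 + 1 →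
      ‖Ly t y v‖ ≤ C := by
    have hcomp : IsCompact (T ×ˢ (Metric.closedBall (0 : En n) (B1 + 1) ×ˢ
        Metric.closedBall (0 : En n) (B2 + 1))) :=
      hTc.prod ((isCompact_closedBall _ _).prod (isCompact_closedBall _ _))
    obtain ⟨C, hC⟩ := hcomp.exists_bound_of_continuousOn
      (hLyc.mono (prod_mono subset_rfl (subset_univ _)))
    refine ⟨max C 0, le_max_right _ _, fun t ht y v hy hv => ?_⟩
    refine le_trans (hC (t, y, v) ⟨ht, ?_, ?_⟩) (le_max_left _ _)
    · simpa using hy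
    · simpa using hv
  have hsc : tsSigma K c = c := by
    unfold tsSigma
    rw [if_neg]
    rintro ⟨u, hu, huc⟩
    exact absurd (hKb u hu) (not_le.mpr huc)
  have hydc : ContinuousWithinAt yds K c := (hys2 c hcK).1 hsc
  obtain ⟨r0, hr0, hr0p⟩ : ∃ r0 > 0, ∀ t ∈ K, |t - c| < r0 → ∀ z : En n, ‖z‖ < r0 →
      ‖p‖ ^ 2 / 2 ≤ inner ℝ (Lv t (ys t) (yds t + z)) p := by
    have hcont : ContinuousWithinAt (fun q : ℝ × En n => inner ℝ (Lv q.1 (ys q.1) (yds q.1 + q.2)) p)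
        (K ×ˢ univ) (c, 0) := by
      have hm : ContinuousWithinAt (fun q : ℝ × En n => ((q.1, ys q.1, yds q.1 + q.2) : ℝ × En n × En n))
          (K ×ˢ univ) (c, 0) := by
        have hfst : ContinuousWithinAt (fun q : ℝ × En n => q.1) (K ×ˢ univ) (c, 0) :=
          continuous_fst.continuousWithinAt
        have hmaps : MapsTo (fun q : ℝ × En n => q.1) (K ×ˢ univ) K := fun q hq => hq.1
        have h1 : ContinuousWithinAt (fun q : ℝ × En n => ys q.1) (K ×ˢ univ) (c, 0) :=
          ContinuousWithinAt.comp (g := ys) (t := K) (hysc c hcK) hfst hmaps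
        have h2 : ContinuousWithinAt (fun q : ℝ × En n => yds q.1) (K ×ˢ univ) (c, 0) :=
          ContinuousWithinAt.comp (g := yds) (t := K) hydc hfst hmaps
        exact hfst.prodMk (h1.prodMk (h2.add continuous_snd.continuousWithinAt))
      have h3 : ContinuousWithinAt (fun q : ℝ × En n => Lv q.1 (ys q.1) (yds q.1 + q.2))
          (K ×ˢ univ) (c, 0) :=
        ContinuousWithinAt.comp (g := fun p : ℝ × En n × En n => Lv p.1 p.2.1 p.2.2)
          (t := T ×ˢ (univ : Set (En n × En n))) (hLvc _ ⟨hcT, mem_univ _⟩) hm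
          (fun q hq => ⟨hKT hq.1, mem_univ _⟩)
      exact ContinuousWithinAt.inner (𝕜 := ℝ) h3 continuousWithinAt_const
    rw [Metric.continuousWithinAt_iff] at hcont
    obtain ⟨r0, hr0, h⟩ := hcont (‖p‖ ^ 2 / 2) (by positivity)
    refine ⟨r0, hr0, fun t ht htc z hz => ?_⟩
    have := @h (t, z) ⟨ht, mem_univ _⟩ (by
      rw [Prod.dist_eq]
      apply max_lt
      · simpa [Real.dist_eq] using htc
      · simpa using hz)
    simp only [add_zero, ← hp] at this
    rw [Real.dist_eq, abs_lt, real_inner_self_eq_norm_sq] at this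
    linarith [this.1]
  -- parameters
  obtain ⟨r, hr, hrr0, hrC⟩ : ∃ r > 0, r ≤ r0 ∧ C * ‖p‖ * (2 * r) < ‖p‖ ^ 2 / 2 := by
    refine ⟨min r0 (‖p‖ / (8 * (C + 1))), by positivity, min_le_left _ _, ?_⟩
    have h1 := min_le_right r0 (‖p‖ / (8 * (C + 1)))
    rw [le_div_iff₀ (by positivity)] at h1
    set r := min r0 (‖p‖ / (8 * (C + 1)))
    have hr : 0 < r := by positivity
    have : C * (2 * r) < ‖p‖ / 2 := by nlinarith
    nlinarith
  set D := (1 + (b - a)) * ‖p‖ with hD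
  have hDp : 0 < D := by have : 0 < 1 + (b - a) := by linarith
                         positivity
  obtain ⟨ε, hε, hεδ, hε1, hεr⟩ : ∃ ε > 0, ε * D < δ ∧ ε * D < 1 ∧ ε * D < r0 := by
    have hm : 0 < min δ (min 1 r0) := by positivity
    refine ⟨min δ (min 1 r0) / (2 * D), by positivity, ?_⟩
    have : min δ (min 1 r0) / (2 * D) * D = min δ (min 1 r0) / 2 := by field_simp
    rw [this]
    have h1 := min_le_left δ (min 1 r0)
    have h2 := min_le_right δ (min 1 r0)
    have h3 := min_le_left 1 r0
    have h4 := min_le_right 1 r0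
    refine ⟨?_, ?_, ?_⟩ <;> linarith
  obtain ⟨Φ, hΦ, hΦa, hΦb, hΦ1, hΦ2⟩ := tent_prim hKc hr haK hcK hKa hKb hcb hd
  set φ := tent c r with hφ
  set w : En n := -(ε • p) with hw
  have hwn : ‖w‖ = ε * ‖p‖ := by rw [hw, norm_neg, norm_smul, Real.norm_of_nonneg hε.le]
  have hφ0 : ∀ t, 0 ≤ φ t := tent_nonneg c r
  have hφ1 : ∀ t, φ t ≤ 1 := tent_le hr
  have hwD1 : ‖w‖ + (b - a) * ‖w‖ = ε * D := by rw [hwn, hD]; ring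
  have hwD2 : 0 ≤ (b - a) * ‖w‖ := mul_nonneg (by linarith) (norm_nonneg _)
  have hKI : ∀ t ∈ K, t ∈ Icc a b := fun t ht => ⟨hKa t ht, hTb t (hKT ht)⟩
  have hΦw : ∀ t ∈ K, ‖Φ t • w‖ ≤ (b - a) * ‖w‖ := fun t ht => by
    obtain ⟨h1, h2, h3⟩ := hΦ1 t (hKI t ht)
    rw [norm_smul, Real.norm_of_nonneg h1]
    exact mul_le_mul_of_nonneg_right h3 (norm_nonneg _)
  have hφw : ∀ t, ‖φ t • w‖ ≤ ‖w‖ := fun t => by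
    rw [norm_smul, Real.norm_of_nonneg (hφ0 t)]
    exact mul_le_of_le_one_left (norm_nonneg _) (hφ1 t)
  have hydrd : RdContinuousOn K (fun t => yds t + φ t • w) :=
    rd_add hys2 ((tent_cont c r).smul continuous_const)
  have hydd : ∀ t ∈ K, deltaDiffAt T (fun t => ys t + Φ t • w) t (yds t + φ t • w) := by
    intro t ht
    refine deltaDiff_add (hys1 t ht) ?_ w
    rw [hΦ]
    exact ext_antideriv hKeq hKc haK hKa (rd_of_cont (tent_cont c r)) ht
  have hyc : ContinuousOn (fun t => ys t + Φ t • w) K := fun t ht =>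
    (deltaDiff_cont (hKT ht) (hydd t ht)).mono hKT
  have hfrd := rd_comp hKT hLc hysc hys2
  have hgrd := rd_comp hKT hLc hyc hydrd
  have hfin := hmin (fun t => ys t + Φ t • w) (fun t => yds t + φ t • w) ⟨hydd, hydrd⟩
    (by simp [hΦa]) (by
      refine lt_of_le_of_lt ?_ hεδ
      rw [← hwD1, add_comm ‖w‖]
      apply add_le_add
      · apply csSup_le ((nonempty_of_mem haK).image _)
        rintro _ ⟨t, ht, rfl⟩
        simpa using hΦw t ht
      · apply csSup_le ((nonempty_of_mem haK).image _)
        rintro _ ⟨t, ht, rfl⟩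
        simpa using hφw t) _ _
    (fun t ht => ext_antideriv hKeq hKc haK hKa hfrd ht)
    (fun t ht => ext_antideriv hKeq hKc haK hKa hgrd ht)
  simp only [intervalIntegral.integral_same, sub_zero] at hfin
  -- pointwise estimate
  have hpt : ∀ t ∈ K, L t (ys t + Φ t • w) (yds t + φ t • w) - L t (ys t) (yds t) ≤
      ε * (C * ‖p‖) * Φ t - ε * (‖p‖ ^ 2 / 2) * φ t := by
    intro t ht
    have htT := hKT ht
    obtain ⟨hΦ0, -, -⟩ := hΦ1 t (hKI t ht)
    have h1 := grad_mvt (hLy t htT · (yds t + φ t • w)) (ys t) (Φ t • w)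
      (ε * (C * ‖p‖) * Φ t) (by
        intro θ hθ
        refine (real_inner_le_norm _ _).trans ?_
        have hb1 : ‖ys t + θ • Φ t • w‖ ≤ B1 + 1 := by
          refine (norm_add_le _ _).trans (add_le_add (hB1 t ht) ?_)
          rw [norm_smul, Real.norm_of_nonneg hθ.1]
          have := mul_le_of_le_one_left (norm_nonneg (Φ t • w)) hθ.2
          linarith [hΦw t ht, norm_nonneg w]
        have hb2 : ‖yds t + φ t • w‖ ≤ B2 + 1 := by
          refine (norm_add_le _ _).trans (add_le_add (hB2 t ht) ?_)
          linarith [hφw t]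
        have := hC t htT _ _ hb1 hb2
        rw [norm_smul, Real.norm_of_nonneg hΦ0, hwn]
        calc _ ≤ C * (Φ t * (ε * ‖p‖)) := mul_le_mul_of_nonneg_right this (by positivity)
          _ = _ := by ring)
    have h2 := grad_mvt (hLv t htT (ys t)) (yds t) (φ t • w)
      (-(ε * (‖p‖ ^ 2 / 2) * φ t)) (by
        intro θ hθ
        rcases lt_or_ge |t - c| r with htr | htr
        · have hz : ‖θ • φ t • w‖ < r0 := by
            rw [norm_smul, Real.norm_of_nonneg hθ.1]
            have := mul_le_of_le_one_left (norm_nonneg (φ t • w)) hθ.2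
            linarith [hφw t]
          have := hr0p t ht (htr.trans_le hrr0) _ hz
          rw [inner_smul_right, hw, inner_neg_right, inner_smul_right]
          rw [hw] at this
          have := mul_le_mul_of_nonneg_left this (mul_nonneg hε.le (hφ0 t))
          linarith
        · have : φ t = 0 := tent_zero hr htr
          simp [this])
    linarith
  have hIφ : ∀ x y, IntervalIntegrable (fun s => φ (piK K a s)) MeasureTheory.volume x y :=
    ext_integrable hKc haK (rd_of_cont (tent_cont c r))
  have hIf := ext_integrable hKc haK hfrd a b
  have hIg := ext_integrable hKc haK hgrd a b
  set A := ε * (C * ‖p‖) with hA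
  have hA0 : 0 ≤ A := by positivity
  have hbound : ∀ s ∈ Icc a b, (fun t => L t (ys t + Φ t • w) (yds t + φ t • w)) (piK K a s)
      - (fun t => L t (ys t) (yds t)) (piK K a s) ≤
      (A * Φ b) * indicator (Icc (c - r) c) (fun _ => (1 : ℝ)) s
        + (A * r - ε * (‖p‖ ^ 2 / 2)) * φ (piK K a s) := by
    intro s hs
    have h1 := hpt _ (piK_mem hKc haK s).1
    have h2 := mul_le_mul_of_nonneg_left (hΦ2 s hs) hA0
    simp only
    linarith
  have hint := intervalIntegral.integral_mono_on hab.le (hIg.sub hIf)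
    (((ind_integrable (c - r) c a b).const_mul (A * Φ b)).add
      ((hIφ a b).const_mul (A * r - ε * (‖p‖ ^ 2 / 2)))) hbound
  rw [intervalIntegral.integral_sub hIg hIf, intervalIntegral.integral_add
    ((ind_integrable (c - r) c a b).const_mul (A * Φ b))
      ((hIφ a b).const_mul (A * r - ε * (‖p‖ ^ 2 / 2))),
    intervalIntegral.integral_const_mul, intervalIntegral.integral_const_mul] at hint
  have hi := ind_integral (x := a) (y := b) (by linarith : c - r ≤ c) hab.le
  have hi2 := mul_le_mul_of_nonneg_left hi (mul_nonneg hA0 hΦb.le)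
  have hΦbe : ∫ s in a..b, φ (piK K a s) = Φ b := by rw [hΦ]
  rw [hΦbe] at hint
  have hneg : 0 < (ε * Φ b) * (‖p‖ ^ 2 / 2 - C * ‖p‖ * (2 * r)) :=
    mul_pos (mul_pos hε hΦb) (by linarith)
  have hAe : A * Φ b * (c - (c - r)) + (A * r - ε * (‖p‖ ^ 2 / 2)) * Φ b =
      -((ε * Φ b) * (‖p‖ ^ 2 / 2 - C * ‖p‖ * (2 * r))) := by rw [hA]; ring
  linarith
end
end
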